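/- There exists ε₀ > 0 such that for every 0 < ε ≤ ε₀ there exists η₀ > 0 such that for every 0 < η ≤ η₀ the restriction of f to the Milnor tube N(ε,η) = {x ∈ B̄(0,ε) : ‖f(x)‖ = η} is a locally trivial fibration N(ε,η) → {w ∈ ℂ : ‖w‖ = η} (the Milnor–Lê fibration). -/

import Mathlib

/-- `p : Z → B` is a locally trivial fibration (with some fibre `F`). -/
def IsLocTrivFib {Z B : Type} [TopologicalSpace Z] [TopologicalSpace B] (p : Z → B) : Prop :=
  ∃ (F : Type) (_ : TopologicalSpace F), Continuous p ∧
    ∀ b : B, ∃ W : Set B, IsOpen W ∧ b ∈ W ∧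
      ∃ e : (p ⁻¹' W) ≃ₜ (W × F), ∀ z : (p ⁻¹' W), ((e z).1 : B) = p (z : Z)

/-!
The rotation of the circle `|w| = η` is lifted through `f` to a vector field on the tube which is
tangent to the boundary sphere; its flow preserves the tube, rotates `f`, and so trivialises `f`
over arcs of the circle. The lift exists as long as `f` has no critical point on the tube and its
fibres are transverse to the sphere `‖x‖ = ε`. Both follow from `radial_estimate`: near the origin,
at a point with `f ≠ 0` where `df = μ ⟪x, ·⟫`, one has `μ ≠ 0` and `|f| ≥ (‖x‖²)^N` for a fixed
`N`, so that there is no such point with `‖x‖ = ε` once `|f| < (ε²)^N`. No stratification of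
`f = 0` and no desingularization is used.

The estimate is a curve selection argument, carried out formally. Suppose there are points
violating it for every `N`, and pass to the limit along an ultrafilter. The germs of `x`, `conj x`,
`‖x‖²`, `f` and of finitely many bounded quotients lie in a Noetherian `ℂ`-algebra, since the
convergent power series in `x` form a Noetherian ring. The image of this algebra under a formal arc
centred at the limit, along which `‖x‖² f ≠ 0`, satisfies the same equations as the germs. To
construct the arc, cut the algebra down to dimension one, take a valuation ring dominating it,
which is discrete by the Krull–Akizuki theorem and has residue field `ℂ`, and complete.

Let `(a, b)` be the limit of `(μ ‖x‖², f)` after normalisation, and `tᵢ` that of `|xᵢ|² / ‖x‖²`.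
Comparing the leading coefficients in the chain rule `F' = ∑ Dᵢ xᵢ'` along the arc yields
`b · ord f = a · ∑ tᵢ ord xᵢ`, where `0 < ∑ tᵢ ord xᵢ ≤ ord ‖x‖²`. Hence `b ≠ 0`, and if `f` is
divisible by `(‖x‖²)^N` then `N |b| ≤ |a|`, which is absurd for large `N`.
-/

section

open scoped ENNReal NNReal ComplexConjugate
open Filter

/-! ### Formal arcs in Noetherian algebras -/

section KrullAkizuki

open Module

section Length

variable {R M N P : Type*} [Ring R] [AddCommGroup M] [Module R M] [AddCommGroup N] [Module R N]
  [AddCommGroup P] [Module R P]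

lemma length_quotient_range_comp (f : N →ₗ[R] M) {g : M →ₗ[R] P} (hg : Function.Injective g) :
    length R (P ⧸ (g ∘ₗ f).range) = length R (M ⧸ f.range) + length R (P ⧸ g.range) := by
  have hle : (g ∘ₗ f).range ≤ g.range := LinearMap.range_comp_le_range f g
  have hcomap : f.range = (g ∘ₗ f).range.comap g := by
    rw [LinearMap.range_comp, Submodule.comap_map_eq_of_injective hg]
  refine length_eq_add_of_exact (f.range.mapQ _ g hcomap.le) (Submodule.factor hle) ?_
    (Submodule.factor_surjective hle) ?_
  · rw [← LinearMap.ker_eq_bot, Submodule.ker_mapQ, ← hcomap, Submodule.mkQ_map_self]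
  · rw [LinearMap.exact_iff, Submodule.range_mapQ, Submodule.factor, Submodule.ker_mapQ,
      Submodule.comap_id]

lemma length_quotient_range_eq_of_comm {i : N →ₗ[R] M} {φ : N →ₗ[R] N} {ψ : M →ₗ[R] M}
    (hi : Function.Injective i) (hψ : Function.Injective ψ) (hcomm : ψ ∘ₗ i = i ∘ₗ φ)
    (hfin : length R (M ⧸ i.range) ≠ ⊤) :
    length R (M ⧸ ψ.range) = length R (N ⧸ φ.range) := by
  have h := length_quotient_range_comp i hψ
  rw [hcomm, length_quotient_range_comp φ hi, add_comm] at h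
  exact (WithTop.add_left_cancel hfin h).symm

lemma length_le_of_forall_fg {d : ℕ∞} (h : ∀ L : Submodule R M, L.FG → length R L ≤ d) :
    length R M ≤ d := by
  have hsup : ⨆ L : {L : Submodule R M // L.FG}, length R L ≤ d := iSup_le fun L ↦ h L L.2
  obtain rfl | hd := eq_or_ne d ⊤
  · exact le_top
  have : Nonempty {L : Submodule R M // L.FG} := ⟨⊥, Submodule.fg_bot⟩
  obtain ⟨⟨L, hL⟩, hmax⟩ := ENat.exists_eq_iSup_of_lt_top (hsup.trans_lt hd.lt_top)
  have htop : L = ⊤ := by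
    refine eq_top_iff.2 fun m _ ↦ by_contra fun hm ↦ ?_
    have hlt : L < L ⊔ R ∙ m := by simpa using hm
    have hfin : Order.height L < ⊤ := length_submodule (N := L) ▸ (h L hL).trans_lt hd.lt_top
    refine (Order.height_strictMono hlt hfin).not_ge ?_
    rw [← length_submodule, ← length_submodule]
    exact (le_iSup (fun L : {L : Submodule R M // L.FG} ↦ length R L)
      ⟨_, hL.sup (Submodule.fg_span_singleton m)⟩).trans_eq hmax.symm
  subst htop
  exact length_top (R := R) (M := M) ▸ h _ hL

lemma exists_fg_map_eq_of_fg {f : M →ₗ[R] P} (hf : Function.Surjective f) {L : Submodule R P}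
    (hL : L.FG) : ∃ L₀ : Submodule R M, L₀.FG ∧ L₀.map f = L := by
  obtain ⟨S, rfl⟩ := hL
  refine ⟨Submodule.span R (Function.surjInv hf '' S),
    Submodule.fg_span (S.finite_toSet.image _), ?_⟩
  rw [Submodule.map_span, ← Set.image_comp, (Function.rightInverse_surjInv hf).comp_eq_id,
    Set.image_id]

end Length

variable {A V : Type*} [CommRing A] [IsDomain A] [CommRing V] [Algebra A V]

lemma exists_common_denominator_of_fg
    (hV : ∀ v : V, ∃ x : A, x ≠ 0 ∧ ∃ a : A, algebraMap A V a = x • v) {L : Submodule A V}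
    (hL : L.FG) : ∃ x : A, x ≠ 0 ∧ ∀ v ∈ L, ∃ a : A, algebraMap A V a = x • v := by
  induction L, hL using Submodule.fg_induction with
  | singleton v =>
    obtain ⟨x, hx, a, ha⟩ := hV v
    refine ⟨x, hx, fun w hw ↦ ?_⟩
    obtain ⟨b, rfl⟩ := Submodule.mem_span_singleton.1 hw
    exact ⟨b * a, by rw [map_mul, ha, ← Algebra.smul_def, smul_comm]⟩
  | sup L₁ L₂ _ _ h₁ h₂ =>
    obtain ⟨x₁, hx₁, h₁⟩ := h₁
    obtain ⟨x₂, hx₂, h₂⟩ := h₂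
    refine ⟨x₁ * x₂, mul_ne_zero hx₁ hx₂, fun v hv ↦ ?_⟩
    obtain ⟨v₁, hv₁, v₂, hv₂, rfl⟩ := Submodule.mem_sup.1 hv
    obtain ⟨a₁, ha₁⟩ := h₁ v₁ hv₁
    obtain ⟨a₂, ha₂⟩ := h₂ v₂ hv₂
    refine ⟨x₂ * a₁ + x₁ * a₂, ?_⟩
    simp only [map_add, map_mul, ha₁, ha₂, Algebra.smul_def]
    ring

variable [IsDomain V] [FaithfulSMul A V]

lemma exists_injective_linearMap_of_fg
    (hV : ∀ v : V, ∃ x : A, x ≠ 0 ∧ ∃ a : A, algebraMap A V a = x • v) {L : Submodule A V}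
    (hL : L.FG) : ∃ g : L →ₗ[A] A, Function.Injective g := by
  obtain ⟨x, hx, hxL⟩ := exists_common_denominator_of_fg hV hL
  let e := LinearEquiv.ofInjective (Algebra.linearMap A V) (FaithfulSMul.algebraMap_injective A V)
  let m : L →ₗ[A] (Algebra.linearMap A V).range :=
    (LinearMap.lsmul A V x ∘ₗ L.subtype).codRestrict _ fun v ↦ hxL v v.2
  refine ⟨e.symm ∘ₗ m, e.symm.injective.comp fun v w hvw ↦ Subtype.ext ?_⟩
  exact smul_right_injective V hx (congrArg Subtype.val hvw)

variable [IsNoetherianRing A] [Ring.KrullDimLE 1 A]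

lemma length_quotient_smul_eq_ord {L : Type*} [AddCommGroup L] [Module A L] {i : A →ₗ[A] L}
    {g : L →ₗ[A] A} (hi : Function.Injective i) (hg : Function.Injective g) {y : A} (hy : y ≠ 0) :
    length A (L ⧸ (LinearMap.lsmul A L y).range) = Ring.ord A y := by
  have hrange (x : A) : (LinearMap.lsmul A A x).range = Ideal.span {x} := by
    ext a
    simp [Ideal.mem_span_singleton', mul_comm]
  have hgi : g ∘ₗ i = LinearMap.lsmul A A (g (i 1)) := by ext; simp
  have hgi0 : g (i 1) ≠ 0 := by simp [map_eq_zero_iff _ hg, map_eq_zero_iff _ hi]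
  have hinj : Function.Injective (LinearMap.lsmul A L y) := fun v w hvw ↦
    hg (mul_left_cancel₀ hy (by simpa using congrArg g hvw))
  rw [length_quotient_range_eq_of_comm hi hinj (φ := LinearMap.lsmul A A y)
    (by ext; simp [← map_smul]), hrange, Ring.ord]
  refine ne_top_of_le_ne_top (Ring.ord_ne_top (mem_nonZeroDivisors_of_ne_zero hgi0)) ?_
  rw [Ring.ord, ← hrange, ← hgi, length_quotient_range_comp i hg]
  exact le_self_add


lemma length_le_ord_of_surjective
    (hV : ∀ v : V, ∃ x : A, x ≠ 0 ∧ ∃ a : A, algebraMap A V a = x • v) {Q : Type*} [AddCommGroup Q]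
    [Module A Q] {π : V →ₗ[A] Q} (hπ : Function.Surjective π) {y : A} (hy : y ≠ 0)
    (hyπ : ∀ v, π (y • v) = 0) : length A Q ≤ Ring.ord A y := by
  refine length_le_of_forall_fg fun N hN ↦ ?_
  obtain ⟨L₀, hL₀, rfl⟩ := exists_fg_map_eq_of_fg hπ hN
  let L : Submodule A V := L₀ ⊔ A ∙ 1
  obtain ⟨g, hg⟩ := exists_injective_linearMap_of_fg hV (hL₀.sup (Submodule.fg_span_singleton 1))
  have h1 : (1 : V) ∈ L := Submodule.mem_sup_right (Submodule.mem_span_singleton_self 1)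
  let i : A →ₗ[A] L := (Algebra.linearMap A V).codRestrict L fun a ↦ by
    simpa [Algebra.smul_def] using L.smul_mem a h1
  have hi : Function.Injective i := fun a b hab ↦ FaithfulSMul.algebraMap_injective A V <|
    congrArg Subtype.val hab
  have hker : (LinearMap.lsmul A L y).range ≤ (π ∘ₗ L.subtype).ker := by
    rintro _ ⟨v, rfl⟩
    exact hyπ v
  let q := Submodule.liftQ _ (π ∘ₗ L.subtype) hker
  have hle : L₀.map π ≤ q.range := by
    rw [Submodule.range_liftQ, LinearMap.range_comp, Submodule.range_subtype]
    exact Submodule.map_mono le_sup_left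
  calc length A (L₀.map π) ≤ length A q.range :=
        length_le_of_injective (Submodule.inclusion hle) (Submodule.inclusion_injective hle)
    _ ≤ length A (L ⧸ (LinearMap.lsmul A L y).range) :=
        length_le_of_surjective q.rangeRestrict q.surjective_rangeRestrict
    _ = Ring.ord A y := length_quotient_smul_eq_ord hi hg hy

lemma length_quotient_ne_top_of_ne_bot
    (hV : ∀ v : V, ∃ x : A, x ≠ 0 ∧ ∃ a : A, algebraMap A V a = x • v) {J : Ideal V}
    (hJ : J ≠ ⊥) : length A (V ⧸ J) ≠ ⊤ := by
  obtain ⟨v, hv, hv0⟩ := Submodule.exists_mem_ne_zero_of_ne_bot hJ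
  obtain ⟨x, hx, y, hy⟩ := hV v
  have hy0 : y ≠ 0 := by
    rintro rfl
    exact smul_ne_zero hx hv0 (by simpa using hy.symm)
  have hyJ : algebraMap A V y ∈ J := by
    rw [hy, Algebra.smul_def]
    exact J.mul_mem_left _ hv
  refine ne_top_of_le_ne_top (Ring.ord_ne_top (mem_nonZeroDivisors_of_ne_zero hy0)) ?_
  refine length_le_ord_of_surjective hV (π := (Submodule.mkQ J).restrictScalars A)
    (Submodule.mkQ_surjective J) hy0 fun w ↦ ?_
  rw [Algebra.smul_def]
  exact Ideal.Quotient.eq_zero_iff_mem.2 (J.mul_mem_right w hyJ)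

/-- The **Krull–Akizuki theorem**, for an overring `V` of `A` inside the fraction field. -/
theorem isNoetherianRing_of_krullDimLE_one
    (hV : ∀ v : V, ∃ x : A, x ≠ 0 ∧ ∃ a : A, algebraMap A V a = x • v) : IsNoetherianRing V := by
  refine (isNoetherianRing_iff_ideal_fg V).2 fun J ↦ ?_
  obtain rfl | hJ := eq_or_ne J ⊥
  · exact Submodule.fg_bot
  obtain ⟨v, hv, hv0⟩ := Submodule.exists_mem_ne_zero_of_ne_bot hJ
  have : IsNoetherian A (V ⧸ Ideal.span {v}) := (isFiniteLength_iff_isNoetherian_isArtinian.1 <|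
    length_ne_top_iff.1 <| length_quotient_ne_top_of_ne_bot hV (by simpa using hv0)).1
  have : IsNoetherian V (V ⧸ Ideal.span {v}) := isNoetherian_of_tower A this
  refine Submodule.fg_of_fg_map_of_fg_inf_ker (Submodule.mkQ (Ideal.span {v}))
    (IsNoetherian.noetherian _) ?_
  rw [Submodule.ker_mkQ, inf_eq_right.2 ((Ideal.span_singleton_le_iff_mem J).2 hv)]
  exact Submodule.fg_span_singleton v

end KrullAkizuki

section FormalArc

open Module IsLocalRing PowerSeries

variable {k : Type*} [Field k]

lemma ker_algHom_eq_maximalIdeal {A : Type*} [CommRing A] [IsLocalRing A] [Algebra k A]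
    (ρ : A →ₐ[k] k) : RingHom.ker ρ = maximalIdeal A :=
  eq_maximalIdeal <| RingHom.ker_isMaximal_of_surjective _ fun c ↦ ⟨algebraMap k A c, by simp⟩

lemma algHom_eq_of_isLocalRing {A : Type*} [CommRing A] [IsLocalRing A] [Algebra k A]
    (ρ σ : A →ₐ[k] k) : ρ = σ := by
  ext a
  have ha : a - algebraMap k A (σ a) ∈ RingHom.ker ρ := by
    rw [ker_algHom_eq_maximalIdeal ρ, ← ker_algHom_eq_maximalIdeal σ]
    simp [RingHom.mem_ker]
  simpa [RingHom.mem_ker, sub_eq_zero] using ha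

section Taylor

variable {O : Type*} [CommRing O] [Algebra k O]

/-- The Taylor series `∑ ρ(δⁿ v) Xⁿ` of `v`, where `ρ` is evaluation at a point and `δ` takes
`v` to the difference quotient `(v - ρ v) / s` for a parameter `s` at the point. -/
noncomputable def taylorSeries (ρ : O →ₗ[k] k) (δ : O →ₗ[k] O) : O →ₗ[k] k⟦X⟧ where
  toFun v := .mk fun n ↦ ρ ((δ ^ n) v)
  map_add' v w := by ext; simp
  map_smul' c v := by ext; simp

lemma coeff_succ_taylorSeries (ρ : O →ₗ[k] k) (δ : O →ₗ[k] O) (v : O) (n : ℕ) :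
    coeff (n + 1) (taylorSeries ρ δ v) = coeff n (taylorSeries ρ δ (δ v)) := by
  simp [taylorSeries, pow_succ]

lemma taylorSeries_eq (ρ : O →ₗ[k] k) (δ : O →ₗ[k] O) (v : O) :
    taylorSeries ρ δ v = C (ρ v) + X * taylorSeries ρ δ (δ v) := by
  ext n
  cases n with
  | zero => simp [taylorSeries]
  | succ n => simp [coeff_succ_taylorSeries, coeff_succ_X_mul, coeff_succ_C]

lemma taylorSeries_mul (ρ : O →ₐ[k] k) {δ : O →ₗ[k] O}
    (hδ : ∀ v w, δ (v * w) = δ v * w + ρ v • δ w) (v w : O) :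
    taylorSeries ρ.toLinearMap δ (v * w) =
      taylorSeries ρ.toLinearMap δ v * taylorSeries ρ.toLinearMap δ w := by
  ext n
  induction n generalizing v w with
  | zero => simp [taylorSeries]
  | succ n ih =>
    rw [coeff_succ_taylorSeries, hδ, map_add, map_add, ih, taylorSeries_eq _ _ v, add_mul,
      mul_assoc, map_add, coeff_succ_X_mul, coeff_C_mul, coeff_succ_taylorSeries, map_smul,
      add_comm]
    simp

variable [IsDomain O]

lemma exists_differenceQuotient (ρ : O →ₐ[k] k) {s : O} (hs : RingHom.ker ρ = Ideal.span {s})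
    (hs0 : s ≠ 0) : ∃ δ : O →ₗ[k] O, ∀ v, s * δ v = v - algebraMap k O (ρ v) := by
  have hdvd (v : O) : ∃ w, s * w = v - algebraMap k O (ρ v) := by
    have hv : v - algebraMap k O (ρ v) ∈ RingHom.ker ρ := by simp [RingHom.mem_ker]
    rw [hs, Ideal.mem_span_singleton] at hv
    exact hv.imp fun w hw ↦ hw.symm
  choose δ hδ using hdvd
  refine ⟨{ toFun := δ, map_add' := fun v w ↦ ?_, map_smul' := fun c v ↦ ?_ }, hδ⟩
  · apply mul_left_cancel₀ hs0
    rw [mul_add, hδ, hδ, hδ, map_add, map_add]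
    ring
  · apply mul_left_cancel₀ hs0
    rw [mul_smul_comm, hδ, hδ, map_smul]
    simp [mul_sub, Algebra.smul_def]

lemma exists_injective_algHom_powerSeries [IsLocalRing O] [IsNoetherianRing O] (ρ : O →ₐ[k] k)
    {s : O} (hs : RingHom.ker ρ = Ideal.span {s}) (hs0 : s ≠ 0) :
    ∃ ψ : O →ₐ[k] k⟦X⟧, Function.Injective ψ := by
  obtain ⟨δ, hδ⟩ := exists_differenceQuotient ρ hs hs0
  have hδ1 : δ 1 = 0 := by simpa [hs0] using hδ 1
  have hδmul (v w : O) : δ (v * w) = δ v * w + ρ v • δ w := by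
    apply mul_left_cancel₀ hs0
    rw [mul_add, ← mul_assoc, mul_smul_comm, hδ, hδ, hδ, Algebra.smul_def, map_mul, map_mul]
    ring
  let ψ : O →ₐ[k] k⟦X⟧ := AlgHom.ofLinearMap (taylorSeries ρ.toLinearMap δ)
    (by rw [taylorSeries_eq, hδ1, map_zero]; simp) (taylorSeries_mul ρ hδmul)
  refine ⟨ψ, (RingHom.injective_iff_ker_eq_bot ψ).2 ?_⟩
  refine Submodule.eq_bot_of_le_smul_of_le_jacobson_bot (RingHom.ker ρ) _
    (IsNoetherian.noetherian _) (fun v hv ↦ ?_) ?_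
  · have hψ : C (ρ v) + X * ψ (δ v) = 0 :=
      (taylorSeries_eq ρ.toLinearMap δ v).symm.trans hv
    have hρ : ρ v = 0 := by simpa using congrArg constantCoeff hψ
    have hv' : v = s * δ v := by simp [hδ, hρ]
    rw [hs, hv']
    refine Submodule.smul_mem_smul (Ideal.mem_span_singleton_self s) ?_
    simpa [hρ, RingHom.mem_ker] using hψ
  · rw [jacobson_eq_maximalIdeal _ bot_ne_top]
    exact le_maximalIdeal (RingHom.ker_ne_top _)

end Taylor

lemma nonempty_algHom_of_finite_residueField [IsAlgClosed k] (V : Type*) [CommRing V]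
    [IsLocalRing V] [Algebra k V] [Module.Finite k (ResidueField V)] : Nonempty (V →ₐ[k] k) :=
  ⟨(AlgEquiv.ofBijective (Algebra.ofId k (ResidueField V))
    IsAlgClosed.algebraMap_bijective_of_isIntegral).symm.toAlgHom.comp
      (IsScalarTower.toAlgHom k V (ResidueField V))⟩

lemma finite_residueField_of_algHom {A V : Type*} [CommRing A] [IsLocalRing A] [Algebra k A]
    (st : A →ₐ[k] k) [CommRing V] [IsLocalRing V] [Algebra A V] [IsLocalHom (algebraMap A V)]
    [Algebra k V] [IsScalarTower k A V] [Module.Finite A (ResidueField V)] :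
    Module.Finite k (ResidueField V) := by
  have : Module.Finite k (ResidueField A) := by
    refine .of_surjective (Algebra.linearMap k (ResidueField A)) fun r ↦ ?_
    obtain ⟨a, rfl⟩ := residue_surjective r
    have ha : algebraMap k A (st a) - a ∈ maximalIdeal A := by
      rw [← ker_algHom_eq_maximalIdeal st]
      simp [RingHom.mem_ker]
    refine ⟨st a, ?_⟩
    rw [Algebra.linearMap_apply, IsScalarTower.algebraMap_apply k A, ResidueField.algebraMap_eq,
      ← sub_eq_zero, ← map_sub, residue_eq_zero_iff]
    exact ha
  have : Module.Finite (ResidueField A) (ResidueField V) := .of_restrictScalars_finite A _ _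
  exact .trans (ResidueField A) _

section DominatingRing

variable [IsAlgClosed k] {A : Type*} [CommRing A] [IsDomain A] [IsLocalRing A] [IsNoetherianRing A]
  [Ring.KrullDimLE 1 A] [Algebra k A]

lemma exists_injective_algHom_powerSeries_of_dominates (st : A →ₐ[k] k) {V : Type*} [CommRing V]
    [IsDomain V] [ValuationRing V] [Algebra A V] [FaithfulSMul A V] [IsLocalHom (algebraMap A V)]
    [Algebra k V] [IsScalarTower k A V] (hmax : maximalIdeal V ≠ ⊥)
    (hV : ∀ v : V, ∃ x : A, x ≠ 0 ∧ ∃ a : A, algebraMap A V a = x • v) :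
    ∃ ψ : V →ₐ[k] k⟦X⟧, Function.Injective ψ := by
  have : IsNoetherianRing V := isNoetherianRing_of_krullDimLE_one hV
  have : IsNoetherian A (ResidueField V) := (isFiniteLength_iff_isNoetherian_isArtinian.1 <|
    length_ne_top_iff.1 <| length_quotient_ne_top_of_ne_bot hV hmax).1
  have : Module.Finite k (ResidueField V) := finite_residueField_of_algHom st
  obtain ⟨ρ⟩ := nonempty_algHom_of_finite_residueField (k := k) V
  obtain ⟨s, hs⟩ :=
    (IsBezout.isPrincipal_of_FG (maximalIdeal V) (IsNoetherian.noetherian _)).principal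
  refine exists_injective_algHom_powerSeries ρ ((ker_algHom_eq_maximalIdeal ρ).trans hs) ?_
  rintro rfl
  exact hmax (by simpa using hs)

lemma exists_injective_algHom_powerSeries_of_krullDimLE_one (st : A →ₐ[k] k) :
    ∃ φ : A →ₐ[k] k⟦X⟧, Function.Injective φ := by
  let K := FractionRing A
  obtain ⟨V, hAV, hloc⟩ := exists_factor_valuationRing (algebraMap A K)
  let j : A →+* V := (algebraMap A K).codRestrict V.toSubring hAV
  let : Algebra A V := j.toAlgebra
  let : Algebra k V := (j.comp (algebraMap k A)).toAlgebra
  have : IsScalarTower k A V := .of_algebraMap_eq fun _ ↦ rfl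
  have : IsLocalHom (algebraMap A V) := hloc
  have hj : Function.Injective j := fun a b hab ↦
    IsFractionRing.injective A K (congrArg Subtype.val hab)
  have : FaithfulSMul A V := (faithfulSMul_iff_algebraMap_injective A V).2 hj
  by_cases hmax : maximalIdeal V = ⊥
  · have hst : Function.Injective st := (RingHom.injective_iff_ker_eq_bot st).2 ?_
    · exact ⟨(Algebra.ofId k k⟦X⟧).comp st, (algebraMap k k⟦X⟧).injective.comp hst⟩
    have hcomap : (maximalIdeal V).comap j = maximalIdeal A :=
      ((local_hom_TFAE (algebraMap A V)).out 0 4 rfl rfl).1 hloc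
    rw [ker_algHom_eq_maximalIdeal, ← hcomap, hmax]
    exact (RingHom.injective_iff_ker_eq_bot j).1 hj
  have hV (v : V) : ∃ x : A, x ≠ 0 ∧ ∃ a : A, algebraMap A V a = x • v := by
    obtain ⟨a, x, hx, hax⟩ := IsFractionRing.div_surjective A (v : K)
    have hx0 : algebraMap A K x ≠ 0 := IsFractionRing.to_map_ne_zero_of_mem_nonZeroDivisors hx
    refine ⟨x, nonZeroDivisors.ne_zero hx, a, Subtype.ext ?_⟩
    change algebraMap A K a = algebraMap A K x * v
    rw [← hax, mul_div_cancel₀ _ hx0]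
  obtain ⟨ψ, hψ⟩ := exists_injective_algHom_powerSeries_of_dominates st hmax hV
  exact ⟨ψ.comp (IsScalarTower.toAlgHom k A V), hψ.comp hj⟩

end DominatingRing

lemma exists_mem_minimalPrimes_of_mem {A : Type*} [CommRing A] [IsDomain A] [IsNoetherianRing A]
    {h : A} (h0 : h ≠ 0) (hP : ∀ P : Ideal A, P.IsPrime → P ≠ ⊥ → h ∈ P) {M : Ideal A} [M.IsPrime]
    {x : A} (hx : x ∈ M) (hx0 : x ≠ 0) : ∃ q ∈ (Ideal.span {h}).minimalPrimes, x ∈ q := by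
  obtain ⟨p, hp, -⟩ := Ideal.exists_minimalPrimes_le ((Ideal.span_singleton_le_iff_mem M).2 hx)
  have := hp.1.1
  have hxp : x ∈ p := hp.1.2 (Ideal.mem_span_singleton_self x)
  have hhp : h ∈ p := hP p this (Submodule.ne_bot_iff p |>.2 ⟨x, hxp, hx0⟩)
  obtain ⟨q, hq, hqp⟩ := Ideal.exists_minimalPrimes_le ((Ideal.span_singleton_le_iff_mem p).2 hhp)
  have := hq.1.1
  have hq0 : q ≠ ⊥ := Submodule.ne_bot_iff q |>.2 ⟨h, hq.1.2 (Ideal.mem_span_singleton_self h), h0⟩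
  have hheight : p.height ≤ q.height :=
    (Ideal.height_le_one_of_isPrincipal_of_mem_minimalPrimes _ p hp).trans <|
      Order.one_le_iff_ne_zero.2 (mt Ideal.height_eq_zero_iff_eq_bot.1 hq0)
  exact ⟨q, hq, Ideal.eq_of_le_of_height_le _ hqp hheight ▸ hxp⟩

lemma krullDimLE_one_of_forall_mem {A : Type*} [CommRing A] [IsDomain A] [IsNoetherianRing A]
    {h : A} (h0 : h ≠ 0) (hP : ∀ P : Ideal A, P.IsPrime → P ≠ ⊥ → h ∈ P) :
    Ring.KrullDimLE 1 A := by
  refine Ring.krullDimLE_one_iff_of_noZeroDivisors.2 fun P hP0 hPprime ↦ ?_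
  obtain ⟨M, hM, hPM⟩ := P.exists_le_maximal hPprime.ne_top
  have hhP : Ideal.span {h} ≤ P := (Ideal.span_singleton_le_iff_mem P).2 (hP P hPprime hP0)
  have hfin := Ideal.finite_minimalPrimes_of_isNoetherianRing A (Ideal.span {h})
  have hsub : (M : Set A) ⊆ ⋃ q ∈ (hfin.toFinset : Set (Ideal A)), (q : Set A) := by
    intro x hx
    simp only [hfin.coe_toFinset, Set.mem_iUnion₂, SetLike.mem_coe, exists_prop]
    obtain rfl | hx0 := eq_or_ne x 0
    · obtain ⟨q, hq, -⟩ := Ideal.exists_minimalPrimes_le hhP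
      exact ⟨q, hq, q.zero_mem⟩
    · exact exists_mem_minimalPrimes_of_mem h0 hP hx hx0
  obtain ⟨q, hq, hMq⟩ := (Ideal.subset_union_prime ⊤ ⊤
    fun q hq _ _ ↦ (hfin.mem_toFinset.1 hq).1.1).1 hsub
  have hqP : q ≤ P := (hfin.mem_toFinset.1 hq).2 ⟨hPprime, hhP⟩ (hPM.trans hMq)
  exact (hPM.antisymm (hMq.trans hqP)) ▸ hM

section Arc

variable [IsAlgClosed k] {A : Type*} [CommRing A] [IsNoetherianRing A] [Algebra k A]

lemma exists_algHom_powerSeries_of_isLocalRing [IsDomain A] [IsLocalRing A] (st : A →ₐ[k] k) {h : A}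
    (h0 : h ≠ 0) : ∃ φ : A →ₐ[k] k⟦X⟧, φ h ≠ 0 := by
  obtain ⟨p, ⟨hpp, hhp⟩, hpmax⟩ := set_has_maximal_iff_noetherian.2 ‹IsNoetherianRing A›
    {p : Ideal A | p.IsPrime ∧ h ∉ p} ⟨⊥, Ideal.isPrime_bot, h0⟩
  have hst : ∀ a ∈ p, st a = 0 := fun a ha ↦ by
    have := le_maximalIdeal hpp.ne_top ha
    rwa [← ker_algHom_eq_maximalIdeal st] at this
  let π := Ideal.Quotient.mkₐ k p
  have : IsLocalRing (A ⧸ p) := .of_surjective' (Ideal.Quotient.mk p) Ideal.Quotient.mk_surjective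
  have hπ (P : Ideal (A ⧸ p)) (hP : P.IsPrime) (hP0 : P ≠ ⊥) : π h ∈ P := by
    by_contra hhP
    refine hpmax (P.comap π) ⟨hP.comap π, hhP⟩ ?_
    have hcomap : p = (⊥ : Ideal (A ⧸ p)).comap π := by
      rw [← RingHom.ker_eq_comap_bot]
      exact (Ideal.mk_ker (I := p)).symm
    conv_lhs => rw [hcomap]
    exact (Ideal.comap_mono bot_le).lt_of_ne fun h ↦
      hP0 (Ideal.comap_injective_of_surjective π Ideal.Quotient.mk_surjective h).symm
  have h0π : π h ≠ 0 := by rwa [Ne, Ideal.Quotient.mkₐ_eq_mk, Ideal.Quotient.eq_zero_iff_mem]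
  have := krullDimLE_one_of_forall_mem h0π hπ
  obtain ⟨φ, hφ⟩ := exists_injective_algHom_powerSeries_of_krullDimLE_one
    (Ideal.Quotient.liftₐ p st hst)
  exact ⟨φ.comp π, (map_ne_zero_iff φ hφ).2 h0π⟩

/-- **Formal curve selection**: a point `st` of an irreducible scheme is the centre of a formal arc
which is not contained in the hypersurface `h = 0`. -/
theorem exists_formal_arc [IsDomain A] (st : A →ₐ[k] k) {h : A} (h0 : h ≠ 0) :
    ∃ φ : A →ₐ[k] k⟦X⟧, (∀ a, constantCoeff (φ a) = st a) ∧ φ h ≠ 0 := by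
  have : (RingHom.ker st).IsPrime := RingHom.ker_isPrime st
  let B := Localization.AtPrime (RingHom.ker st)
  let st' : B →ₐ[k] k := IsLocalization.liftAlgHom (M := (RingHom.ker st).primeCompl) (f := st)
    fun y ↦ isUnit_iff_ne_zero.2 y.2
  have hle := Ideal.primeCompl_le_nonZeroDivisors (RingHom.ker st)
  have : IsDomain B := IsLocalization.isDomain_localization hle
  have : IsNoetherianRing B := IsLocalization.isNoetherianRing (RingHom.ker st).primeCompl B ‹_›
  have hinj : Function.Injective (algebraMap A B) := IsLocalization.injective B hle
  obtain ⟨φ, hφ⟩ := exists_algHom_powerSeries_of_isLocalRing st' ((map_ne_zero_iff _ hinj).2 h0)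
  refine ⟨φ.comp (IsScalarTower.toAlgHom k A B), fun a ↦ ?_, hφ⟩
  have hst' : st' (algebraMap A B a) = st a := IsLocalization.lift_eq _ a
  let ev : k⟦X⟧ →ₐ[k] k := .mk' constantCoeff fun c a ↦ by simp
  have heval : ev.comp φ = st' := algHom_eq_of_isLocalRing _ _
  exact (DFunLike.congr_fun heval _).trans hst'

end Arc

end FormalArc

/-! ### Convergent power series -/

section ConvergentSeries

open MvPowerSeries

variable {σ 𝕜 : Type*} [NormedField 𝕜]

/-- The weighted `ℓ¹`-norm `∑ ‖P_α‖ w_α` of a power series, with values in `[0, ∞]`. -/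
noncomputable def wnorm (w : (σ →₀ ℕ) → ℝ≥0) (P : MvPowerSeries σ 𝕜) : ℝ≥0∞ :=
  ∑' α, ‖coeff α P‖ₑ * w α

section WeightedNorm

variable {w w' : (σ →₀ ℕ) → ℝ≥0}

lemma wnorm_zero : wnorm w (0 : MvPowerSeries σ 𝕜) = 0 := by simp [wnorm]

lemma wnorm_add_le (P Q : MvPowerSeries σ 𝕜) : wnorm w (P + Q) ≤ wnorm w P + wnorm w Q := by
  rw [wnorm, wnorm, wnorm, ← ENNReal.tsum_add]
  refine ENNReal.tsum_le_tsum fun α ↦ ?_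
  rw [map_add, ← add_mul]
  gcongr
  exact enorm_add_le _ _

lemma wnorm_sum_le {ι : Type*} (s : Finset ι) (P : ι → MvPowerSeries σ 𝕜) :
    wnorm w (∑ i ∈ s, P i) ≤ ∑ i ∈ s, wnorm w (P i) :=
  Finset.le_sum_of_subadditive _ wnorm_zero.le wnorm_add_le s P

lemma wnorm_mono (h : w ≤ w') (P : MvPowerSeries σ 𝕜) : wnorm w P ≤ wnorm w' P := by
  refine ENNReal.tsum_le_tsum fun α ↦ ?_
  gcongr
  exact h α

lemma wnorm_monomial (α : σ →₀ ℕ) (c : 𝕜) : wnorm w (monomial α c) = ‖c‖ₑ * w α := by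
  classical
  rw [wnorm, tsum_eq_single α fun β hβ ↦ by simp [coeff_monomial, hβ], coeff_monomial_same]

lemma wnorm_mul_le (hw : ∀ α β, w (α + β) = w α * w β) (P Q : MvPowerSeries σ 𝕜) :
    wnorm w (P * Q) ≤ wnorm w P * wnorm w Q := by
  classical
  let F : (σ →₀ ℕ) × (σ →₀ ℕ) → ℝ≥0∞ := fun p ↦ ‖coeff p.1 P‖ₑ * w p.1 * (‖coeff p.2 Q‖ₑ * w p.2)
  calc wnorm w (P * Q)
      ≤ ∑' α, ∑ p ∈ Finset.HasAntidiagonal.antidiagonal α, F p := by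
        refine ENNReal.tsum_le_tsum fun α ↦ ?_
        rw [coeff_mul]
        refine (mul_le_mul_left (enorm_sum_le _ _) _).trans ?_
        rw [Finset.sum_mul]
        refine Finset.sum_le_sum fun p hp ↦ le_of_eq ?_
        rw [← Finset.HasAntidiagonal.mem_antidiagonal.1 hp, hw, enorm_mul, ENNReal.coe_mul]
        ring
    _ = ∑' p, F p := by
        simp_rw [← Finset.tsum_subtype]
        rw [← ENNReal.tsum_sigma fun α (p : Finset.HasAntidiagonal.antidiagonal α) ↦ F p.1]
        exact (Finset.HasAntidiagonal.sigmaAntidiagonalEquivProd (A := σ →₀ ℕ)).tsum_eq F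
    _ = wnorm w P * wnorm w Q := by
        rw [ENNReal.tsum_prod', wnorm, wnorm]
        simp_rw [F, ENNReal.tsum_mul_left, ENNReal.tsum_mul_right]

end WeightedNorm

variable (𝕜 σ) in
/-- The power series converging absolutely on some polydisc of positive radius. -/
noncomputable def convSeries : Subalgebra 𝕜 (MvPowerSeries σ 𝕜) where
  carrier := {P | ∃ r : ℝ≥0, 0 < r ∧ wnorm (fun α ↦ r ^ α.degree) P ≠ ⊤}
  algebraMap_mem' c := ⟨1, one_pos, by
    rw [MvPowerSeries.algebraMap_apply, Algebra.algebraMap_self_apply,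
      ← monomial_zero_eq_C_apply, wnorm_monomial]
    simp⟩
  add_mem' := by
    rintro P Q ⟨r, h0, h⟩ ⟨r', h0', h'⟩
    refine ⟨min r r', lt_min h0 h0', ne_top_of_le_ne_top ?_ (wnorm_add_le P Q)⟩
    exact ENNReal.add_ne_top.2 ⟨ne_top_of_le_ne_top h (wnorm_mono (fun α ↦ by gcongr; simp) P),
      ne_top_of_le_ne_top h' (wnorm_mono (fun α ↦ by gcongr; simp) Q)⟩
  mul_mem' := by
    rintro P Q ⟨r, h0, h⟩ ⟨r', h0', h'⟩
    refine ⟨min r r', lt_min h0 h0', ne_top_of_le_ne_top ?_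
      (wnorm_mul_le (fun α β ↦ by rw [map_add, pow_add]) P Q)⟩
    exact ENNReal.mul_ne_top (ne_top_of_le_ne_top h (wnorm_mono (fun α ↦ by gcongr; simp) P))
      (ne_top_of_le_ne_top h' (wnorm_mono (fun α ↦ by gcongr; simp) Q))

lemma monomial_mem_convSeries (α : σ →₀ ℕ) (c : 𝕜) : monomial α c ∈ convSeries σ 𝕜 :=
  ⟨1, one_pos, by simp [wnorm_monomial]⟩

section DivPart

/-- The part of a power series with exponents in `D ∩ (s + ℕ^σ)`, divided by the monomial
`x ^ s`. -/
noncomputable def divPart (s : σ →₀ ℕ) (D : Set (σ →₀ ℕ)) :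
    MvPowerSeries σ 𝕜 →+ MvPowerSeries σ 𝕜 where
  toFun P := fun β ↦ D.indicator (fun α ↦ coeff α P) (β + s)
  map_zero' := funext fun β ↦ by simp; rfl
  map_add' P Q := funext fun β ↦ by simp [Set.indicator_add]; rfl

variable {s : σ →₀ ℕ} {D : Set (σ →₀ ℕ)}

lemma coeff_divPart (P : MvPowerSeries σ 𝕜) (β : σ →₀ ℕ) :
    coeff β (divPart s D P) = D.indicator (fun α ↦ coeff α P) (β + s) := rfl

lemma coeff_monomial_mul_divPart (hD : ∀ α ∈ D, s ≤ α) (P : MvPowerSeries σ 𝕜) (α : σ →₀ ℕ) :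
    coeff α (monomial s 1 * divPart s D P) = D.indicator (fun α ↦ coeff α P) α := by
  classical
  rw [coeff_monomial_mul]
  split_ifs with h
  · rw [coeff_divPart, tsub_add_cancel_of_le h, one_mul]
  · rw [Set.indicator_of_notMem fun hα ↦ h (hD α hα)]

variable {w : (σ →₀ ℕ) → ℝ≥0}

lemma wnorm_divPart_mul_le (hw : ∀ α β, w (α + β) = w α * w β) (P : MvPowerSeries σ 𝕜) :
    wnorm w (divPart s D P) * w s ≤ ∑' α, D.indicator (fun α ↦ ‖coeff α P‖ₑ * w α) α := by
  refine le_trans (le_of_eq ?_) (ENNReal.tsum_comp_le_tsum_of_injective (add_left_injective s) _)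
  rw [wnorm, ← ENNReal.tsum_mul_right]
  refine tsum_congr fun β ↦ ?_
  by_cases hβ : β + s ∈ D
  · rw [coeff_divPart, Set.indicator_of_mem hβ, Set.indicator_of_mem hβ, hw, ENNReal.coe_mul,
      mul_assoc]
  · rw [coeff_divPart, Set.indicator_of_notMem hβ, Set.indicator_of_notMem hβ, enorm_zero, zero_mul,
      zero_mul]

lemma sum_wnorm_divPart_le (hw : ∀ α β, w (α + β) = w α * w β) (S : Finset (σ →₀ ℕ))
    {D : (σ →₀ ℕ) → Set (σ →₀ ℕ)} (hD : Pairwise (Function.onFun Disjoint D))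
    (P : MvPowerSeries σ 𝕜) : ∑ s ∈ S, wnorm w (divPart s (D s) P) * w s ≤ wnorm w P := by
  calc ∑ s ∈ S, wnorm w (divPart s (D s) P) * w s
      ≤ ∑ s ∈ S, ∑' α, (D s).indicator (fun α ↦ ‖coeff α P‖ₑ * w α) α :=
        Finset.sum_le_sum fun s _ ↦ wnorm_divPart_mul_le hw P
    _ = ∑' α, ∑ s ∈ S, (D s).indicator (fun α ↦ ‖coeff α P‖ₑ * w α) α :=
        (Summable.tsum_finsetSum fun _ _ ↦ ENNReal.summable).symm
    _ ≤ wnorm w P := ENNReal.tsum_le_tsum fun α ↦ by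
        rw [← Finset.indicator_biUnion_apply S D fun s _ t _ hst ↦ hD hst]
        exact Set.indicator_le_self _ _ α

end DivPart

/-- The error made when the multiples of the monomials `x ^ s` in a series (those with exponents
in `D s`) are replaced by the same multiples of the series `h s`. -/
noncomputable def divisionError (S : Finset (σ →₀ ℕ)) (D : (σ →₀ ℕ) → Set (σ →₀ ℕ))
    (h : (σ →₀ ℕ) → convSeries σ 𝕜) : MvPowerSeries σ 𝕜 →+ MvPowerSeries σ 𝕜 :=
  ∑ s ∈ S, (AddMonoidHom.mulRight (monomial s 1 - (h s : MvPowerSeries σ 𝕜))).comp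
    (divPart s (D s))

lemma divisionError_apply {S : Finset (σ →₀ ℕ)} {D : (σ →₀ ℕ) → Set (σ →₀ ℕ)}
    {h : (σ →₀ ℕ) → convSeries σ 𝕜} (Q : MvPowerSeries σ 𝕜) :
    divisionError S D h Q =
      ∑ s ∈ S, divPart s (D s) Q * (monomial s 1 - (h s : MvPowerSeries σ 𝕜)) := by
  simp [divisionError, AddMonoidHom.finsetSum_apply]

section NeumannSeries

variable {M : (σ →₀ ℕ) → ℕ} {A : MvPowerSeries σ 𝕜 →+ MvPowerSeries σ 𝕜}

lemma coeff_iterate_eq_zero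
    (hA : ∀ Q α, (∀ β, M β < M α → coeff β Q = 0) → coeff α (A Q) = 0) (Q : MvPowerSeries σ 𝕜)
    {k : ℕ} {α : σ →₀ ℕ} (hα : M α < k) : coeff α (A^[k] Q) = 0 := by
  induction k generalizing α with
  | zero => omega
  | succ k ih =>
    rw [Function.iterate_succ_apply']
    exact hA _ _ fun β hβ ↦ ih (by omega)

lemma wnorm_iterate_le {w : (σ →₀ ℕ) → ℝ≥0} {c : ℝ≥0∞} (hA : ∀ Q, wnorm w (A Q) ≤ c * wnorm w Q)
    (P : MvPowerSeries σ 𝕜) (k : ℕ) : wnorm w (A^[k] P) ≤ c ^ k * wnorm w P := by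
  induction k with
  | zero => simp
  | succ k ih =>
    rw [Function.iterate_succ_apply', pow_succ', mul_assoc]
    exact (hA _).trans (by gcongr)

/-- The Neumann series of an operator which raises the order of a series with respect to `M`; each
coefficient of the sum is a finite sum. -/
noncomputable def neumannSeries (M : (σ →₀ ℕ) → ℕ) (A : MvPowerSeries σ 𝕜 →+ MvPowerSeries σ 𝕜)
    (P : MvPowerSeries σ 𝕜) : MvPowerSeries σ 𝕜 :=
  fun α ↦ ∑ k ∈ Finset.range (M α + 1), coeff α (A^[k] P)

lemma coeff_neumannSeries (P : MvPowerSeries σ 𝕜) (α : σ →₀ ℕ) :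
    coeff α (neumannSeries M A P) = ∑ k ∈ Finset.range (M α + 1), coeff α (A^[k] P) := rfl

lemma coeff_neumannSeries_eq_coeff_sum
    (hA : ∀ Q α, (∀ β, M β < M α → coeff β Q = 0) → coeff α (A Q) = 0) (P : MvPowerSeries σ 𝕜)
    {K : ℕ} {α : σ →₀ ℕ} (hα : M α < K) :
    coeff α (neumannSeries M A P) = coeff α (∑ k ∈ Finset.range K, A^[k] P) := by
  rw [coeff_neumannSeries, map_sum]
  refine Finset.sum_subset (Finset.range_subset_range.2 (by omega)) fun k _ hk ↦ ?_
  exact coeff_iterate_eq_zero hA P (by simpa using hk)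

lemma neumannSeries_eq (hA : ∀ Q α, (∀ β, M β < M α → coeff β Q = 0) → coeff α (A Q) = 0)
    (P : MvPowerSeries σ 𝕜) : neumannSeries M A P = P + A (neumannSeries M A P) := by
  ext α
  let T := ∑ k ∈ Finset.range (M α + 1), A^[k] P
  have hT : coeff α (A (neumannSeries M A P)) = coeff α (A T) := by
    rw [← sub_eq_zero, ← map_sub, ← map_sub]
    exact hA _ _ fun β hβ ↦ by
      rw [map_sub, coeff_neumannSeries_eq_coeff_sum hA P (hβ.trans (Nat.lt_succ_self _)), sub_self]
  have htel : P + A T = T + A^[M α + 1] P := by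
    have hAT : A T = ∑ k ∈ Finset.range (M α + 1), A^[k + 1] P := by
      simp only [T, map_sum, Function.iterate_succ_apply']
    rw [hAT, add_comm]
    exact (Finset.sum_range_succ' (fun k ↦ A^[k] P) _).symm.trans (Finset.sum_range_succ _ _)
  rw [map_add, hT, coeff_neumannSeries_eq_coeff_sum hA P (Nat.lt_succ_self _), ← map_add, htel,
    map_add, coeff_iterate_eq_zero hA P (Nat.lt_succ_self _), add_zero]

lemma wnorm_neumannSeries_le {w : (σ →₀ ℕ) → ℝ≥0} {c : ℝ≥0∞}
    (hA : ∀ Q, wnorm w (A Q) ≤ c * wnorm w Q) (P : MvPowerSeries σ 𝕜) :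
    wnorm w (neumannSeries M A P) ≤ (1 - c)⁻¹ * wnorm w P := by
  calc wnorm w (neumannSeries M A P) ≤ ∑' α, ∑' k, ‖coeff α (A^[k] P)‖ₑ * w α := by
        refine ENNReal.tsum_le_tsum fun α ↦ ?_
        rw [coeff_neumannSeries, ENNReal.tsum_mul_right]
        gcongr
        exact (enorm_sum_le _ _).trans (ENNReal.sum_le_tsum _)
    _ = ∑' k, wnorm w (A^[k] P) := ENNReal.tsum_comm
    _ ≤ ∑' k, c ^ k * wnorm w P := ENNReal.tsum_le_tsum (wnorm_iterate_le hA P)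
    _ = (1 - c)⁻¹ * wnorm w P := by rw [ENNReal.tsum_mul_right, ENNReal.tsum_geometric]

end NeumannSeries

section PrimeWeight

variable [Fintype σ]

/-- The prime attached to a variable. -/
noncomputable def varPrime (i : σ) : ℕ := Nat.nth Nat.Prime (Fintype.equivFin σ i)

lemma prime_varPrime (i : σ) : (varPrime i).Prime := Nat.prime_nth_prime _

lemma varPrime_injective : Function.Injective (varPrime : σ → ℕ) :=
  (Nat.nth_injective Nat.infinite_setOfPred_prime).comp <|
    Fin.val_injective.comp (Fintype.equivFin σ).injective

/-- The multiplicative weight `∏ pᵢ ^ αᵢ` of an exponent, for distinct primes `pᵢ`. It is injective,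
so that comparing weights is a monomial order, and its negative powers are weights for `wnorm`. -/
noncomputable def primeWeight (α : σ →₀ ℕ) : ℕ := ∏ i, varPrime i ^ α i

lemma primeWeight_add (α β : σ →₀ ℕ) : primeWeight (α + β) = primeWeight α * primeWeight β := by
  simp only [primeWeight, Finsupp.add_apply, pow_add, Finset.prod_mul_distrib]

lemma factorization_primeWeight (α : σ →₀ ℕ) (j : σ) :
    (primeWeight α).factorization (varPrime j) = α j := by
  classical
  rw [primeWeight, Nat.factorization_prod fun i _ ↦ pow_ne_zero _ (prime_varPrime i).ne_zero,
    Finset.sum_apply', Finset.sum_eq_single j]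
  · simp [(prime_varPrime j).factorization_pow]
  · intro i _ hij
    simp [(prime_varPrime i).factorization_pow, varPrime_injective.ne hij]
  · simp

lemma primeWeight_injective : Function.Injective (primeWeight : (σ →₀ ℕ) → ℕ) := fun α β h ↦ by
  ext j
  rw [← factorization_primeWeight α, h, factorization_primeWeight]

lemma two_pow_degree_le_primeWeight (α : σ →₀ ℕ) : 2 ^ α.degree ≤ primeWeight α := by
  rw [Finsupp.degree_eq_sum, ← Finset.prod_pow_eq_pow_sum]
  exact Finset.prod_le_prod' fun i _ ↦ Nat.pow_le_pow_left (prime_varPrime i).two_le _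

lemma primeWeight_pos (α : σ →₀ ℕ) : 0 < primeWeight α :=
  (pow_pos two_pos _).trans_le (two_pow_degree_le_primeWeight α)

lemma primeWeight_le_pow_degree (α : σ →₀ ℕ) :
    primeWeight α ≤ (∏ i : σ, varPrime i) ^ α.degree := by
  have hpos : 0 < ∏ i : σ, varPrime i := Finset.prod_pos fun i _ ↦ (prime_varPrime i).pos
  rw [Finsupp.degree_eq_sum, ← Finset.prod_pow_eq_pow_sum]
  exact Finset.prod_le_prod' fun i hi ↦
    Nat.pow_le_pow_left (Nat.le_of_dvd hpos (Finset.dvd_prod_of_mem _ hi)) _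

/-- The weights `(∏ pᵢ ^ αᵢ)⁻ᵘ` of `wnorm`; the polydisc shrinks to the origin as `u → ∞`. -/
noncomputable def invWeight (u : ℕ) (α : σ →₀ ℕ) : ℝ≥0 := (primeWeight α : ℝ≥0)⁻¹ ^ u

lemma invWeight_ne_zero (u : ℕ) (α : σ →₀ ℕ) : invWeight u α ≠ 0 :=
  pow_ne_zero _ (inv_ne_zero (Nat.cast_ne_zero.2 (primeWeight_pos α).ne'))

lemma invWeight_add_exponent (u : ℕ) (α β : σ →₀ ℕ) :
    invWeight u (α + β) = invWeight u α * invWeight u β := by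
  rw [invWeight, primeWeight_add, Nat.cast_mul, mul_inv, mul_pow, invWeight, invWeight]

lemma eventually_wnorm_invWeight_ne_top {P : MvPowerSeries σ 𝕜} (hP : P ∈ convSeries σ 𝕜) :
    ∀ᶠ u in atTop, wnorm (invWeight u) P ≠ ⊤ := by
  obtain ⟨r, hr, h⟩ := hP
  have hlim : Tendsto (fun u : ℕ ↦ (2 : ℝ≥0)⁻¹ ^ u) atTop (nhds 0) :=
    tendsto_pow_atTop_nhds_zero_of_lt_one (by simp) (inv_lt_one_of_one_lt₀ one_lt_two)
  filter_upwards [hlim.eventually_le_const hr] with u hu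
  refine ne_top_of_le_ne_top h (wnorm_mono (fun α ↦ ?_) P)
  calc invWeight u α ≤ ((2 : ℝ≥0) ^ α.degree)⁻¹ ^ u := by
        rw [invWeight]
        gcongr
        exact_mod_cast two_pow_degree_le_primeWeight α
    _ = (2⁻¹ ^ u) ^ α.degree := by rw [← inv_pow, ← pow_mul, ← pow_mul, mul_comm]
    _ ≤ r ^ α.degree := by gcongr

lemma mem_convSeries_of_wnorm_invWeight_ne_top {P : MvPowerSeries σ 𝕜} {u : ℕ}
    (hP : wnorm (invWeight u) P ≠ ⊤) : P ∈ convSeries σ 𝕜 := by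
  have hpos : 0 < ∏ i : σ, varPrime i := Finset.prod_pos fun i _ ↦ (prime_varPrime i).pos
  refine ⟨((∏ i : σ, varPrime i : ℕ) : ℝ≥0)⁻¹ ^ u, by positivity,
    ne_top_of_le_ne_top hP (wnorm_mono (fun α ↦ ?_) P)⟩
  have := primeWeight_pos α
  rw [invWeight, ← pow_mul, mul_comm, pow_mul, inv_pow]
  gcongr
  exact_mod_cast primeWeight_le_pow_degree α

variable {H : MvPowerSeries σ 𝕜} {s : σ →₀ ℕ}

lemma wnorm_invWeight_add_le (hs : ∀ γ, primeWeight γ ≤ primeWeight s → coeff γ H = 0) (u t : ℕ) :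
    wnorm (invWeight (u + t)) H ≤
      wnorm (invWeight u) H * (((primeWeight s + 1 : ℝ≥0)⁻¹ ^ t : ℝ≥0) : ℝ≥0∞) := by
  rw [wnorm, wnorm, ← ENNReal.tsum_mul_right]
  refine ENNReal.tsum_le_tsum fun α ↦ ?_
  obtain hα | hα := le_or_gt (primeWeight α) (primeWeight s)
  · simp [hs α hα]
  · rw [mul_assoc, ← ENNReal.coe_mul]
    have : (primeWeight s + 1 : ℝ≥0) ≤ primeWeight α := by exact_mod_cast hα
    simp only [invWeight, pow_add]
    gcongr

lemma eventually_wnorm_invWeight_le (hH : H ∈ convSeries σ 𝕜)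
    (hs : ∀ γ, primeWeight γ ≤ primeWeight s → coeff γ H = 0) {c : ℝ≥0∞} (hc : 0 < c) :
    ∀ᶠ u in atTop, wnorm (invWeight u) H ≤ c * invWeight u s := by
  obtain ⟨u₀, hu₀⟩ := (eventually_wnorm_invWeight_ne_top hH).exists
  let m : ℝ≥0 := primeWeight s
  have hm : 0 < m := Nat.cast_pos.2 (primeWeight_pos s)
  have hlim : Tendsto (fun t : ℕ ↦ wnorm (invWeight u₀) H *
      (((m / (m + 1)) ^ t * m ^ u₀ : ℝ≥0) : ℝ≥0∞)) atTop (nhds 0) := by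
    have hθ := (tendsto_pow_atTop_nhds_zero_of_lt_one zero_le
      ((div_lt_one (by positivity)).2 (lt_add_one m))).mul_const (m ^ u₀)
    simpa using ENNReal.Tendsto.const_mul (ENNReal.tendsto_coe.2 hθ) (Or.inr hu₀)
  rw [← map_add_atTop_eq_nat u₀, eventually_map]
  filter_upwards [hlim.eventually_le_const hc] with t ht
  rw [add_comm t]
  refine (wnorm_invWeight_add_le hs u₀ t).trans ?_
  have hsplit : ((m + 1)⁻¹ ^ t : ℝ≥0) = (m / (m + 1)) ^ t * m ^ u₀ * invWeight (u₀ + t) s := by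
    change _ = _ * m⁻¹ ^ (u₀ + t)
    simp only [pow_add, div_pow, inv_pow]
    field_simp
  rw [hsplit, ENNReal.coe_mul, ← mul_assoc]
  gcongr

/-- The series is monic with initial exponent `s` for the order of exponents by `primeWeight`. -/
def IsMonicAt (s : σ →₀ ℕ) (P : MvPowerSeries σ 𝕜) : Prop :=
  coeff s P = 1 ∧ ∀ β, primeWeight β < primeWeight s → coeff β P = 0

lemma IsMonicAt.coeff_monomial_sub {P : MvPowerSeries σ 𝕜} (hP : IsMonicAt s P) {γ : σ →₀ ℕ}
    (hγ : primeWeight γ ≤ primeWeight s) : coeff γ (monomial s 1 - P) = 0 := by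
  classical
  obtain hlt | heq := hγ.lt_or_eq
  · have hne : γ ≠ s := fun h ↦ hlt.ne (congrArg _ h)
    rw [map_sub, hP.2 γ hlt, coeff_monomial, if_neg hne, sub_zero]
  · rw [primeWeight_injective heq, map_sub, hP.1, coeff_monomial_same, sub_self]

lemma exists_isMonicAt_C_mul {P : MvPowerSeries σ 𝕜} (hP : P ≠ 0) :
    ∃ α, coeff α P ≠ 0 ∧ IsMonicAt α (C (coeff α P)⁻¹ * P) := by
  obtain ⟨α, hα, hmin⟩ := WellFounded.has_min (measure (primeWeight (σ := σ))).wf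
    {α | coeff α P ≠ 0} (MvPowerSeries.ne_zero_iff_exists_coeff_ne_zero P |>.1 hP)
  refine ⟨α, hα, by rw [coeff_C_mul, inv_mul_cancel₀ hα], fun β hβ ↦ ?_⟩
  rw [coeff_C_mul, not_not.1 fun h ↦ hmin β h hβ, mul_zero]

lemma exists_pairwise_disjoint_subset_Ici {ι : Type*} [Preorder ι] (S : Set ι) :
    ∃ D : ι → Set ι, Pairwise (Function.onFun Disjoint D) ∧ (∀ s, D s ⊆ Set.Ici s) ∧
      ∀ s ∈ S, ∀ α, s ≤ α → ∃ t ∈ S, α ∈ D t := by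
  refine ⟨fun t ↦ {α | ∃ h : ∃ s ∈ S, s ≤ α, h.choose = t}, ?_, ?_, ?_⟩
  · refine fun s t hst ↦ Set.disjoint_left.2 ?_
    rintro α ⟨_, rfl⟩ ⟨_, rfl⟩
    exact hst rfl
  · rintro _ α ⟨h, rfl⟩
    exact h.choose_spec.2
  · exact fun s hs α hsα ↦ ⟨_, (Exists.choose_spec (⟨s, hs, hsα⟩ : ∃ s ∈ S, s ≤ α)).1, _, rfl⟩

section Division

variable {S : Finset (σ →₀ ℕ)} {D : (σ →₀ ℕ) → Set (σ →₀ ℕ)} {h : (σ →₀ ℕ) → convSeries σ 𝕜}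

lemma coeff_divisionError_eq_zero
    (hh : ∀ s ∈ S, IsMonicAt s (h s : MvPowerSeries σ 𝕜)) (Q : MvPowerSeries σ 𝕜) (α : σ →₀ ℕ)
    (hQ : ∀ β, primeWeight β < primeWeight α → coeff β Q = 0) :
    coeff α (divisionError S D h Q) = 0 := by
  classical
  rw [divisionError_apply, map_sum]
  refine Finset.sum_eq_zero fun s hs ↦ ?_
  rw [coeff_mul]
  refine Finset.sum_eq_zero fun x hx ↦ ?_
  obtain hxs | hsx := le_or_gt (primeWeight x.2) (primeWeight s)
  · rw [(hh s hs).coeff_monomial_sub hxs, mul_zero]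
  · have hlt : primeWeight (x.1 + s) < primeWeight α := by
      rw [← Finset.HasAntidiagonal.mem_antidiagonal.1 hx, primeWeight_add, primeWeight_add]
      exact Nat.mul_lt_mul_of_pos_left hsx (primeWeight_pos _)
    have hdiv : coeff x.1 (divPart s (D s) Q) = 0 :=
      Set.indicator_apply_eq_zero.2 fun _ ↦ hQ _ hlt
    rw [hdiv, zero_mul]

lemma wnorm_divisionError_le (hD : Pairwise (Function.onFun Disjoint D)) {c : ℝ≥0∞} {u : ℕ}
    (hu : ∀ s ∈ S, wnorm (invWeight u) (monomial s 1 - (h s : MvPowerSeries σ 𝕜)) ≤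
      c * invWeight u s) (Q : MvPowerSeries σ 𝕜) :
    wnorm (invWeight u) (divisionError S D h Q) ≤ c * wnorm (invWeight u) Q := by
  have hmul := invWeight_add_exponent (σ := σ) u
  rw [divisionError_apply]
  calc wnorm (invWeight u) (∑ s ∈ S, divPart s (D s) Q * (monomial s 1 - (h s : MvPowerSeries σ 𝕜)))
      ≤ ∑ s ∈ S, wnorm (invWeight u) (divPart s (D s) Q) * (c * invWeight u s) := by
        refine (wnorm_sum_le _ _).trans (Finset.sum_le_sum fun s hs ↦ ?_)
        refine (wnorm_mul_le hmul _ _).trans ?_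
        gcongr
        exact hu s hs
    _ = c * ∑ s ∈ S, wnorm (invWeight u) (divPart s (D s) Q) * invWeight u s := by
        rw [Finset.mul_sum]
        exact Finset.sum_congr rfl fun s _ ↦ mul_left_comm _ _ _
    _ ≤ c * wnorm (invWeight u) Q := by
        gcongr
        exact sum_wnorm_divPart_le hmul S hD Q

lemma divPart_mem_convSeries {P : MvPowerSeries σ 𝕜} {u : ℕ} (hP : wnorm (invWeight u) P ≠ ⊤)
    (s : σ →₀ ℕ) (D : Set (σ →₀ ℕ)) : divPart s D P ∈ convSeries σ 𝕜 := by
  refine mem_convSeries_of_wnorm_invWeight_ne_top (u := u) fun htop ↦ hP (top_le_iff.1 ?_)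
  have hle := (wnorm_divPart_mul_le (s := s) (D := D) (invWeight_add_exponent u) P).trans
    (ENNReal.tsum_le_tsum fun α ↦ Set.indicator_le_self D _ α)
  rwa [htop, ENNReal.top_mul (by exact_mod_cast invWeight_ne_zero u s)] at hle

/-- **Division by a finite family of convergent series.** For the weights `invWeight u` with `u`
large, each divisor is a small perturbation of its initial monomial, so that division by the
monomials can be corrected by a Neumann series. -/
theorem exists_division (hh : ∀ s ∈ S, IsMonicAt s (h s : MvPowerSeries σ 𝕜))
    (P : convSeries σ 𝕜) : ∃ q : (σ →₀ ℕ) → convSeries σ 𝕜, ∀ s ∈ S, ∀ α, s ≤ α →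
      coeff α ((P - ∑ s ∈ S, q s * h s : convSeries σ 𝕜) : MvPowerSeries σ 𝕜) = 0 := by
  obtain ⟨D, hD, hDs, hcover⟩ := exists_pairwise_disjoint_subset_Ici (S : Set (σ →₀ ℕ))
  have hsmall : ∀ᶠ u in atTop, ∀ s ∈ S,
      wnorm (invWeight u) (monomial s 1 - (h s : MvPowerSeries σ 𝕜)) ≤ 2⁻¹ * invWeight u s :=
    (eventually_all_finset S).2 fun s hs ↦ eventually_wnorm_invWeight_le
      (sub_mem (monomial_mem_convSeries s 1) (h s).2) (fun γ ↦ (hh s hs).coeff_monomial_sub)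
      (by simp)
  obtain ⟨u, hu, hPu⟩ := (hsmall.and (eventually_wnorm_invWeight_ne_top P.2)).exists
  let P' := neumannSeries primeWeight (divisionError S D h) P
  have hP' : P' = P + divisionError S D h P' := neumannSeries_eq (coeff_divisionError_eq_zero hh) _
  have hP'u : wnorm (invWeight u) P' ≠ ⊤ :=
    ne_top_of_le_ne_top (ENNReal.mul_ne_top (by simp) hPu)
      (wnorm_neumannSeries_le (wnorm_divisionError_le hD hu) _)
  refine ⟨fun s ↦ ⟨divPart s (D s) P', divPart_mem_convSeries hP'u s (D s)⟩, fun s hs α hsα ↦ ?_⟩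
  have hrem : ((P - ∑ s ∈ S, ⟨divPart s (D s) P', divPart_mem_convSeries hP'u s (D s)⟩ * h s :
      convSeries σ 𝕜) : MvPowerSeries σ 𝕜) = P' - ∑ s ∈ S, monomial s 1 * divPart s (D s) P' := by
    rw [AddSubgroupClass.coe_sub, eq_sub_of_add_eq hP'.symm, divisionError_apply,
      AddSubmonoidClass.coe_finsetSum, sub_sub, ← Finset.sum_add_distrib]
    congr 1
    refine Finset.sum_congr rfl fun s _ ↦ ?_
    rw [MulMemClass.coe_mul]
    ring
  obtain ⟨t, ht, hαt⟩ := hcover s hs α hsα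
  have hsum : ∑ s ∈ S, coeff α (monomial s 1 * divPart s (D s) P') = coeff α P' := by
    simp_rw [coeff_monomial_mul_divPart (hDs _)]
    rw [Finset.sum_eq_single_of_mem t ht fun s _ hst ↦ Set.indicator_of_notMem
      (fun hα ↦ (Set.disjoint_left.1 (hD hst)) hα hαt) _, Set.indicator_of_mem hαt]
  rw [hrem, map_sub, map_sum, hsum, sub_self]

end Division

end PrimeWeight

/-- An ideal is generated by elements whose initial exponents are the minimal initial exponents of
its elements; these are finitely many by Dickson's lemma. -/
instance isNoetherianRing_convSeries [Finite σ] : IsNoetherianRing (convSeries σ 𝕜) := by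
  classical
  have := Fintype.ofFinite σ
  refine isNoetherianRing_iff_ideal_fg _ |>.2 fun I ↦ ?_
  let E : Set (σ →₀ ℕ) := {α | ∃ P ∈ I, IsMonicAt α (P : MvPowerSeries σ 𝕜)}
  have hfin : {α | Minimal (· ∈ E) α}.Finite :=
    WellQuasiOrderedLE.finite_of_isAntichain (setOfPred_minimal_antichain (· ∈ E))
  let S : Finset (σ →₀ ℕ) := hfin.toFinset
  have hSE : ∀ s ∈ S, ∃ P ∈ I, IsMonicAt s (P : MvPowerSeries σ 𝕜) :=
    fun s hs ↦ (hfin.mem_toFinset.1 hs).1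
  choose! h hI hh using hSE
  have hspanI : Ideal.span (S.image h : Set (convSeries σ 𝕜)) ≤ I := Ideal.span_le.2 <| by
    simpa [Set.subset_def] using hI
  refine ⟨S.image h, hspanI.antisymm fun P hP ↦ ?_⟩
  obtain ⟨q, hq⟩ := exists_division hh P
  have hspan : ∑ s ∈ S, q s * h s ∈ Ideal.span (S.image h : Set (convSeries σ 𝕜)) :=
    sum_mem fun s hs ↦ Ideal.mul_mem_left _ _ (Ideal.subset_span
      (by simpa using ⟨s, by simpa using hs, rfl⟩))
  suffices hr : P - ∑ s ∈ S, q s * h s = 0 from sub_eq_zero.1 hr ▸ hspan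
  by_contra hr
  obtain ⟨α, hα, hmonic⟩ := exists_isMonicAt_C_mul (Subtype.coe_ne_coe.2 hr)
  have hαE : α ∈ E := ⟨⟨_, monomial_mem_convSeries 0 _⟩ * _,
    I.mul_mem_left _ (I.sub_mem hP (hspanI hspan)), hmonic⟩
  obtain ⟨s, hsα, hs⟩ := (Set.isPWO_of_wellQuasiOrderedLE E).exists_le_minimal hαE
  exact hα (hq s (hfin.mem_toFinset.2 hs) α hsα)

end ConvergentSeries

/-! ### Monomials -/

section Monomials

variable {ι R : Type*} [Fintype ι] [CommRing R]

/-- The monomial `x ^ α = ∏ i, x i ^ α i`. -/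
def mon (x : ι → R) (α : ι →₀ ℕ) : R := ∏ i, x i ^ α i

@[simp] lemma mon_zero (x : ι → R) : mon x 0 = 1 := by simp [mon]

lemma mon_add (x : ι → R) (α β : ι →₀ ℕ) : mon x (α + β) = mon x α * mon x β := by
  simp [mon, pow_add, Finset.prod_mul_distrib]

lemma mon_single (x : ι → R) (i : ι) : mon x (Finsupp.single i 1) = x i := by
  classical
  rw [mon, Finset.prod_eq_single i (fun j _ hj ↦ by simp [hj.symm]) (by simp)]
  simp

lemma mon_cons {m : ℕ} (x : Fin (m + 1) → R) (k : ℕ) (α : Fin m →₀ ℕ) :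
    mon x (Finsupp.cons k α) = x 0 ^ k * mon (Fin.tail x) α := by
  simp [mon, Fin.prod_univ_succ, Fin.tail]

lemma mon_comp_equiv {κ : Type*} [Fintype κ] (e : ι ≃ κ) (x : ι → R) (α : ι →₀ ℕ) :
    mon (x ∘ e.symm) (Finsupp.domCongr e α) = mon x α := by
  simp [mon, ← e.prod_comp]

lemma norm_mon_le (x : ι → ℂ) (α : ι →₀ ℕ) : ‖mon x α‖ ≤ ‖x‖ ^ α.degree := by
  rw [mon, norm_prod, Finsupp.degree_eq_sum, ← Finset.prod_pow_eq_pow_sum]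
  refine Finset.prod_le_prod (fun _ _ ↦ norm_nonneg _) fun i _ ↦ ?_
  rw [norm_pow]
  gcongr
  exact norm_le_pi_norm x i

end Monomials

section Exponents

/-- Exponents in `m + 1` variables as pairs of the first exponent and the remaining ones. -/
noncomputable def finsuppConsEquiv (m : ℕ) : ℕ × (Fin m →₀ ℕ) ≃ (Fin (m + 1) →₀ ℕ) where
  toFun p := Finsupp.cons p.1 p.2
  invFun α := (α 0, Finsupp.tail α)
  left_inv p := by simp
  right_inv α := by simp

lemma degree_cons {m : ℕ} (k : ℕ) (α : Fin m →₀ ℕ) :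
    (Finsupp.cons k α).degree = k + α.degree := by
  simp [Finsupp.degree_eq_sum, Fin.sum_univ_succ]

lemma degree_domCongr {ι κ : Type*} (e : ι ≃ κ) (α : ι →₀ ℕ) :
    (Finsupp.domCongr e α).degree = α.degree := by
  rw [Finsupp.domCongr_apply, Finsupp.equivMapDomain_eq_mapDomain, Finsupp.degree_mapDomain]

lemma summable_pow_degree_fin (m : ℕ) {t : ℝ} (h0 : 0 ≤ t) (h1 : t < 1) :
    Summable fun α : Fin m →₀ ℕ ↦ t ^ α.degree := by
  induction m with
  | zero => exact Summable.of_finite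
  | succ m ih =>
    rw [← (finsuppConsEquiv m).summable_iff]
    refine ((summable_geometric_of_lt_one h0 h1).mul_of_nonneg ih (fun _ ↦ pow_nonneg h0 _)
      fun _ ↦ pow_nonneg h0 _).congr fun p ↦ ?_
    simp [finsuppConsEquiv, degree_cons, pow_add]

lemma summable_pow_degree (ι : Type*) [Finite ι] {t : ℝ} (h0 : 0 ≤ t) (h1 : t < 1) :
    Summable fun α : ι →₀ ℕ ↦ t ^ α.degree := by
  rw [← (Finsupp.domCongr (M := ℕ) (Finite.equivFin ι).symm).toEquiv.summable_iff]
  exact (summable_pow_degree_fin _ h0 h1).congr fun α ↦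
    congrArg (t ^ ·) (degree_domCongr _ α).symm

end Exponents

/-! ### Osgood's lemma -/

section Osgood

open Function Metric Topology

variable {ι F : Type*} [NormedAddCommGroup F] [NormedSpace ℂ F]

/-- `(f x - f x₀) / x i` where `x₀` is `x` with `i`-th coordinate replaced by `0`, extended
holomorphically to `x i = 0`. -/
noncomputable def divVar [DecidableEq ι] (i : ι) (f : (ι → ℂ) → F) (x : ι → ℂ) : F :=
  dslope (fun z ↦ f (update x i z)) 0 (x i)

variable {R M : ℝ} {f : (ι → ℂ) → F} {x : ι → ℂ} {i : ι}

lemma norm_dslope_zero_le {g : ℂ → F} (hg : DifferentiableOn ℂ g (ball 0 R))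
    (hM : ∀ z ∈ ball 0 R, ‖g z‖ ≤ M) {z : ℂ} (hz : z ∈ ball 0 R) :
    ‖dslope g 0 z‖ ≤ 2 / R * M := by
  have hmaps : Set.MapsTo g (ball 0 R) (closedBall (g 0) (2 * M)) := fun w hw ↦ by
    have h0 := hM 0 (mem_ball_self (pos_of_mem_ball hz))
    rw [mem_closedBall_iff_norm]
    linarith [norm_sub_le (g w) (g 0), hM w hw]
  exact (Complex.norm_dslope_le_div_of_mapsTo_ball hg hmaps hz).trans_eq (by ring)

lemma div_two_div_mul_lt_one {t : ℝ} (hR : 0 < R) (ht : t < R / 2) : 2 / R * t < 1 := by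
  rw [div_mul_eq_mul_div, div_lt_one hR]
  linarith

lemma summable_mon_smul [Fintype ι] [CompleteSpace F] {c : (ι →₀ ℕ) → F} (hR : 0 < R)
    (hc : ∀ α, ‖c α‖ ≤ M * (2 / R) ^ α.degree) (hx : x ∈ ball 0 (R / 2)) :
    Summable fun α ↦ mon x α • c α := by
  rw [mem_ball_zero_iff] at hx
  refine .of_norm_bounded ((summable_pow_degree ι (by positivity)
    (div_two_div_mul_lt_one hR hx)).mul_left M) fun α ↦ ?_
  calc ‖mon x α • c α‖ ≤ ‖x‖ ^ α.degree * (M * (2 / R) ^ α.degree) := by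
        rw [norm_smul]
        gcongr
        exacts [norm_mon_le x α, hc α]
    _ = M * (2 / R * ‖x‖) ^ α.degree := by rw [mul_pow]; ring

variable [DecidableEq ι]

lemma divVar_update (z : ℂ) :
    divVar i f (update x i z) = dslope (fun z ↦ f (update x i z)) 0 z := by
  simp [divVar]

lemma add_smul_divVar (i : ι) (f : (ι → ℂ) → F) (x : ι → ℂ) :
    f (update x i 0) + x i • divVar i f x = f x := by
  have h := sub_smul_dslope (fun z ↦ f (update x i z)) 0 (x i)
  rw [sub_zero, update_eq_self] at h
  rw [divVar, h, add_sub_cancel]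

lemma sum_range_smul_iterate_divVar (i : ι) (f : (ι → ℂ) → F) (x : ι → ℂ) (k : ℕ) :
    ∑ j ∈ Finset.range k, x i ^ j • (divVar i)^[j] f (update x i 0) +
      x i ^ k • (divVar i)^[k] f x = f x := by
  induction k with
  | zero => simp
  | succ k ih =>
    rw [Finset.sum_range_succ, iterate_succ_apply', pow_succ, mul_smul, add_assoc, ← smul_add,
      add_smul_divVar, ih]

variable [Fintype ι]

/-- `f` is holomorphic in each variable separately on the open polydisc of radius `R`. -/
def SepHolo (R : ℝ) (f : (ι → ℂ) → F) : Prop :=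
  ∀ x ∈ ball (0 : ι → ℂ) R, ∀ i, DifferentiableOn ℂ (fun z ↦ f (update x i z)) (ball 0 R)

lemma apply_mem_ball {ι : Type*} [Fintype ι] {x : ι → ℂ} (hx : x ∈ ball 0 R) (i : ι) :
    x i ∈ ball 0 R := by
  rw [mem_ball_zero_iff] at *
  exact (norm_le_pi_norm x i).trans_lt hx

lemma comp_mem_ball {ι κ : Type*} [Fintype ι] [Fintype κ] {x : κ → ℂ} (hx : x ∈ ball 0 R)
    (e : ι → κ) : x ∘ e ∈ ball 0 R := by
  have hR := pos_of_mem_ball hx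
  rw [mem_ball_zero_iff, pi_norm_lt_iff hR] at *
  exact fun j ↦ hx (e j)

lemma update_mem_ball {z : ℂ} (hx : x ∈ ball 0 R) (hz : z ∈ ball 0 R) :
    update x i z ∈ ball 0 R := by
  have hR : 0 < R := pos_of_mem_ball hx
  rw [mem_ball_zero_iff, pi_norm_lt_iff hR] at *
  intro j
  rcases eq_or_ne j i with rfl | hj
  · simpa using hz
  · simpa [hj] using hx j

namespace SepHolo

lemma norm_divVar_le (hf : SepHolo R f) (hM : ∀ x ∈ ball 0 R, ‖f x‖ ≤ M) (hx : x ∈ ball 0 R) :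
    ‖divVar i f x‖ ≤ 2 / R * M :=
  norm_dslope_zero_le (hf x hx i) (fun _ hz ↦ hM _ (update_mem_ball hx hz)) (apply_mem_ball hx i)

lemma differentiableOn_divVar_of_apply_ne_zero {j : ι} (hf : SepHolo R f) (hx : x ∈ ball 0 R)
    (hxi : x i ≠ 0) (hij : i ≠ j) :
    DifferentiableOn ℂ (fun w ↦ divVar i f (update x j w)) (ball 0 R) := by
  simp only [divVar, update_of_ne hij, dslope_of_ne _ hxi, slope_def_module, ← update_comm hij]
  have hR := pos_of_mem_ball hx
  exact ((hf _ (update_mem_ball hx (apply_mem_ball hx i)) j).sub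
    (hf _ (update_mem_ball hx (mem_ball_self hR)) j)).const_smul _

variable [CompleteSpace F]

lemma differentiableOn_divVar_self (hf : SepHolo R f) (hx : x ∈ ball 0 R) :
    DifferentiableOn ℂ (fun z ↦ divVar i f (update x i z)) (ball 0 R) := by
  simp only [divVar_update]
  exact (Complex.differentiableOn_dslope (ball_mem_nhds 0 (pos_of_mem_ball hx))).2 (hf x hx i)

/-- Dividing a second time by `x i` bounds the difference quotients of `divVar i f`. -/
lemma norm_divVar_update_sub_le {z : ℂ} (hf : SepHolo R f) (hM : ∀ x ∈ ball 0 R, ‖f x‖ ≤ M)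
    (hx : x ∈ ball 0 R) (hz : z ∈ ball 0 R) :
    ‖divVar i f (update x i z) - divVar i f (update x i 0)‖ ≤ ‖z‖ * (2 / R * (2 / R * M)) := by
  have h := sub_smul_dslope (fun z ↦ divVar i f (update x i z)) 0 z
  rw [← h, sub_zero, norm_smul]
  gcongr
  exact norm_dslope_zero_le (hf.differentiableOn_divVar_self hx)
    (fun w hw ↦ hf.norm_divVar_le hM (update_mem_ball hx hw)) hz

lemma tendstoUniformlyOn_divVar {j : ι} (hf : SepHolo R f) (hM : ∀ x ∈ ball 0 R, ‖f x‖ ≤ M)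
    (hx : x ∈ ball 0 R) :
    TendstoUniformlyOn (fun z w ↦ divVar i f (update (update x j w) i z))
      (fun w ↦ divVar i f (update (update x j w) i 0)) (𝓝[≠] 0) (ball 0 R) := by
  rw [Metric.tendstoUniformlyOn_iff]
  intro ε hε
  have hlim : Tendsto (fun z : ℂ ↦ ‖z‖ * (2 / R * (2 / R * M))) (𝓝 0) (𝓝 0) :=
    (by fun_prop : Continuous fun z : ℂ ↦ ‖z‖ * (2 / R * (2 / R * M))).tendsto' 0 0 (by simp)
  filter_upwards [nhdsWithin_le_nhds (hlim.eventually_lt_const hε),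
    nhdsWithin_le_nhds (ball_mem_nhds (0 : ℂ) (pos_of_mem_ball hx))] with z hzε hz w hw
  rw [dist_comm, dist_eq_norm]
  exact (hf.norm_divVar_update_sub_le hM (update_mem_ball hx hw) hz).trans_lt hzε

lemma sepHolo_divVar (hf : SepHolo R f) (hM : ∀ x ∈ ball 0 R, ‖f x‖ ≤ M) (i : ι) :
    SepHolo R (divVar i f) := by
  intro x hx j
  rcases eq_or_ne i j with rfl | hij
  · exact hf.differentiableOn_divVar_self hx
  have hne : ∀ z ∈ ball (0 : ℂ) R, z ≠ 0 →
      DifferentiableOn ℂ (fun w ↦ divVar i f (update (update x j w) i z)) (ball 0 R) := by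
    intro z hz hz0
    simp only [update_comm hij.symm]
    exact hf.differentiableOn_divVar_of_apply_ne_zero (update_mem_ball hx hz) (by simpa) hij
  have key : ∀ z ∈ ball (0 : ℂ) R,
      DifferentiableOn ℂ (fun w ↦ divVar i f (update (update x j w) i z)) (ball 0 R) := by
    intro z hz
    rcases eq_or_ne z 0 with rfl | hz0
    · refine (hf.tendstoUniformlyOn_divVar hM hx).tendstoLocallyUniformlyOn.differentiableOn ?_
        isOpen_ball
      filter_upwards [self_mem_nhdsWithin, nhdsWithin_le_nhds (isOpen_ball.mem_nhds hz)]
        with z hz0 hz using hne z hz hz0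
    · exact hne z hz hz0
  convert key (x i) (apply_mem_ball hx i) using 3 with w
  rw [eq_comm, update_eq_self_iff, update_of_ne hij]

lemma iterate_divVar (hf : SepHolo R f) (hM : ∀ x ∈ ball 0 R, ‖f x‖ ≤ M) (i : ι) (k : ℕ) :
    SepHolo R ((divVar i)^[k] f) ∧
      ∀ x ∈ ball 0 R, ‖(divVar i)^[k] f x‖ ≤ M * (2 / R) ^ k := by
  induction k with
  | zero => exact ⟨hf, by simpa using hM⟩
  | succ k ih =>
    rw [iterate_succ_apply']
    refine ⟨ih.1.sepHolo_divVar ih.2 i, fun x hx ↦ (ih.1.norm_divVar_le ih.2 hx).trans_eq ?_⟩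
    rw [pow_succ]
    ring

lemma hasSum_iterate_divVar (hf : SepHolo R f) (hM : ∀ x ∈ ball 0 R, ‖f x‖ ≤ M)
    (hx : x ∈ ball 0 R) (hxi : ‖x i‖ < R / 2) :
    HasSum (fun k ↦ x i ^ k • (divVar i)^[k] f (update x i 0)) (f x) := by
  have hR := pos_of_mem_ball hx
  set t := 2 / R * ‖x i‖
  have ht0 : 0 ≤ t := by positivity
  have ht1 : t < 1 := div_two_div_mul_lt_one hR hxi
  have hbound : ∀ k, ∀ y ∈ ball (0 : ι → ℂ) R,
      ‖x i ^ k • (divVar i)^[k] f y‖ ≤ M * t ^ k := by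
    intro k y hy
    rw [norm_smul, norm_pow, mul_pow, ← mul_assoc, mul_comm]
    gcongr
    exact (hf.iterate_divVar hM i k).2 y hy
  have hsum : Summable fun k ↦ x i ^ k • (divVar i)^[k] f (update x i 0) :=
    .of_norm_bounded ((summable_geometric_of_lt_one ht0 ht1).mul_left M) fun k ↦
      hbound k _ (update_mem_ball hx (mem_ball_self hR))
  have hrem : Tendsto (fun k ↦ x i ^ k • (divVar i)^[k] f x) atTop (𝓝 0) :=
    squeeze_zero_norm (fun k ↦ hbound k x hx) <| by
      simpa using (tendsto_pow_atTop_nhds_zero_of_lt_one ht0 ht1).const_mul M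
  rw [hsum.hasSum_iff_tendsto_nat]
  have hlim := (tendsto_const_nhds (x := f x)).sub hrem
  rw [sub_zero] at hlim
  exact hlim.congr fun k ↦ sub_eq_of_eq_add (sum_range_smul_iterate_divVar i f x k).symm

end SepHolo

lemma cons_mem_ball {m : ℕ} {z : ℂ} {y : Fin m → ℂ} (hz : z ∈ ball 0 R) (hy : y ∈ ball 0 R) :
    (Fin.cons z y : Fin (m + 1) → ℂ) ∈ ball 0 R := by
  have hR := pos_of_mem_ball hz
  rw [mem_ball_zero_iff] at *
  rw [pi_norm_lt_iff hR] at *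
  exact Fin.cases (by simpa using hz) (by simpa using hy)

lemma tail_mem_ball {m : ℕ} {x : Fin (m + 1) → ℂ} (hx : x ∈ ball 0 R) :
    Fin.tail x ∈ ball 0 R := by
  have hR := pos_of_mem_ball hx
  rw [mem_ball_zero_iff, pi_norm_lt_iff hR] at *
  exact fun j ↦ hx j.succ

lemma SepHolo.comp_cons {m : ℕ} {f : (Fin (m + 1) → ℂ) → F} (hf : SepHolo R f) {z : ℂ}
    (hz : z ∈ ball 0 R) : SepHolo R fun y ↦ f (Fin.cons z y : Fin (m + 1) → ℂ) := by
  intro y hy i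
  simpa only [Fin.cons_update] using hf _ (cons_mem_ball hz hy) i.succ

variable [CompleteSpace F]

/-- The coefficients of exponent `k` in the first variable are those of the `k`-fold quotient
`(divVar 0)^[k] f` on the hyperplane where the first variable vanishes. -/
lemma SepHolo.exists_hasSum_fin (m : ℕ) (hR : 0 < R) {f : (Fin m → ℂ) → F} (hf : SepHolo R f)
    (hM : ∀ x ∈ ball 0 R, ‖f x‖ ≤ M) :
    ∃ c : (Fin m →₀ ℕ) → F, (∀ α, ‖c α‖ ≤ M * (2 / R) ^ α.degree) ∧
      ∀ x ∈ ball 0 (R / 2), HasSum (fun α ↦ mon x α • c α) (f x) := by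
  induction m generalizing M with
  | zero =>
    refine ⟨fun _ ↦ f 0, fun α ↦ ?_, fun x _ ↦ ?_⟩
    · simpa [Subsingleton.elim α 0] using hM 0 (mem_ball_self hR)
    · simp [Subsingleton.elim x 0, mon]
  | succ m ih =>
    have h0 : (0 : ℂ) ∈ ball 0 R := mem_ball_self hR
    choose c hc hsum using fun k ↦ ih ((hf.iterate_divVar hM 0 k).1.comp_cons h0)
      fun y hy ↦ (hf.iterate_divVar hM 0 k).2 _ (cons_mem_ball h0 hy)
    have hcα : ∀ α : Fin (m + 1) →₀ ℕ, ‖c (α 0) α.tail‖ ≤ M * (2 / R) ^ α.degree := fun α ↦ by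
      conv_rhs => rw [← Finsupp.cons_tail α, degree_cons, pow_add, ← mul_assoc]
      exact hc _ _
    refine ⟨fun α ↦ c (α 0) α.tail, hcα, fun x hx ↦ ?_⟩
    have hxR : x ∈ ball 0 R := ball_subset_ball (by linarith) hx
    have hsum' := (summable_mon_smul hR hcα hx).hasSum
    have hfib := ((finsuppConsEquiv m).hasSum_iff.2 hsum').prod_fiberwise
      (g := fun k ↦ x 0 ^ k • (divVar 0)^[k] f (update x 0 0)) fun k ↦ by
        rw [← Fin.cons_self_tail x, Fin.update_cons_zero]
        simpa [finsuppConsEquiv, mon_cons, mul_smul] using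
          (hsum k _ (tail_mem_ball hx)).const_smul (x 0 ^ k)
    rwa [hfib.unique (hf.hasSum_iterate_divVar hM hxR (mem_ball_zero_iff.1 (apply_mem_ball hx 0)))]
      at hsum'

/-- **Osgood's lemma** with Cauchy-type bounds. -/
theorem exists_hasSum_mon_smul {ι : Type*} [Fintype ι] {f : (ι → ℂ) → F} (hR : 0 < R)
    (hf : ∀ x ∈ ball 0 R, DifferentiableAt ℂ f x) (hM : ∀ x ∈ ball 0 R, ‖f x‖ ≤ M) :
    ∃ c : (ι →₀ ℕ) → F, (∀ α, ‖c α‖ ≤ M * (2 / R) ^ α.degree) ∧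
      ∀ x ∈ ball 0 (R / 2), HasSum (fun α ↦ mon x α • c α) (f x) := by
  classical
  let e := Fintype.equivFin ι
  have hsep : SepHolo R fun x : Fin (Fintype.card ι) → ℂ ↦ f (x ∘ e) := fun x hx i z hz ↦ by
    refine ((hf _ (comp_mem_ball (update_mem_ball hx hz) e)).comp z ?_).differentiableWithinAt
    exact ((LinearMap.funLeft ℂ ℂ e).toContinuousLinearMap.differentiableAt).comp z
      (hasDerivAt_update x i z).differentiableAt
  obtain ⟨c, hc, hsum⟩ := hsep.exists_hasSum_fin _ hR fun x hx ↦ hM _ (comp_mem_ball hx e)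
  let E : (ι →₀ ℕ) ≃+ _ := Finsupp.domCongr e
  refine ⟨c ∘ E, fun α ↦ ?_, fun x hx ↦ ?_⟩
  · exact (hc _).trans_eq (by rw [degree_domCongr])
  · have h := hsum _ (comp_mem_ball hx e.symm)
    rw [← E.toEquiv.hasSum_iff, comp_assoc, e.symm_comp_self, comp_id] at h
    exact h.congr_fun fun α ↦ by simp [E, ← mon_comp_equiv e]

end Osgood

/-! ### Derivatives and values of convergent power series -/

section PartialDerivatives

open MvPowerSeries

variable {σ : Type*}

lemma succ_mul_half_pow_degree_le {r : ℝ≥0} (hr : 0 < r) (β : σ →₀ ℕ) (i : σ) :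
    ((β i + 1 : ℕ) : ℝ≥0) * (r / 2) ^ β.degree ≤ r⁻¹ * r ^ (β + Finsupp.single i 1).degree := by
  have h : ((β i + 1 : ℕ) : ℝ≥0) ≤ 2 ^ β.degree := mod_cast
    Nat.lt_two_pow_self.trans_le (Nat.pow_le_pow_right two_pos (Finsupp.le_degree i β))
  calc ((β i + 1 : ℕ) : ℝ≥0) * (r / 2) ^ β.degree
      ≤ 2 ^ β.degree * (r / 2) ^ β.degree := by gcongr
    _ = r ^ β.degree := by rw [← mul_pow, mul_div_cancel₀ _ two_ne_zero]
    _ = _ := by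
      rw [map_add, Finsupp.degree_single, pow_succ', inv_mul_cancel_left₀ hr.ne']

lemma wnorm_pderiv_le {r : ℝ≥0} (hr : 0 < r) (i : σ) (P : MvPowerSeries σ ℂ) :
    wnorm (fun α ↦ (r / 2) ^ α.degree) (pderiv ℂ i P) ≤
      (r⁻¹ : ℝ≥0) * wnorm (fun α ↦ r ^ α.degree) P := by
  have hinj : Function.Injective fun β : σ →₀ ℕ ↦ β + Finsupp.single i 1 := add_left_injective _
  refine le_trans ?_ (mul_le_mul_right (ENNReal.tsum_comp_le_tsum_of_injective hinj _) _)
  rw [wnorm, ← ENNReal.tsum_mul_left]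
  refine ENNReal.tsum_le_tsum fun β ↦ ?_
  have h := ENNReal.coe_le_coe.2 (succ_mul_half_pow_degree_le hr β i)
  rw [coeff_pderiv, enorm_mul, ← Nat.cast_add_one, mul_left_comm, mul_assoc]
  refine mul_le_mul_right (le_trans (le_of_eq ?_) (h.trans_eq (ENNReal.coe_mul _ _))) _
  rw [ENNReal.coe_mul, enorm_eq_nnnorm, Complex.nnnorm_natCast]

lemma pderiv_mem_convSeries {P : MvPowerSeries σ ℂ} (hP : P ∈ convSeries σ ℂ) (i : σ) :
    pderiv ℂ i P ∈ convSeries σ ℂ := by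
  obtain ⟨r, hr, h⟩ := hP
  exact ⟨r / 2, half_pos hr, ne_top_of_le_ne_top (ENNReal.mul_ne_top ENNReal.coe_ne_top h)
    (wnorm_pderiv_le hr i P)⟩

/-- The coordinate functions as convergent power series. -/
noncomputable def convX (i : σ) : convSeries σ ℂ :=
  ⟨X i, monomial_mem_convSeries (Finsupp.single i 1) 1⟩

/-- Partial derivatives of convergent power series. -/
noncomputable def convD (i : σ) : Derivation ℂ (convSeries σ ℂ) (convSeries σ ℂ) :=
  .mk' (LinearMap.restrict (p := (convSeries σ ℂ).toSubmodule) (q := (convSeries σ ℂ).toSubmodule)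
    (pderiv ℂ i).toLinearMap fun _ hP ↦ pderiv_mem_convSeries hP i)
    fun P Q ↦ Subtype.ext ((pderiv ℂ i).leibniz P.1 Q.1)

lemma coe_convD (i : σ) (P : convSeries σ ℂ) : (convD i P).1 = pderiv ℂ i P.1 := rfl

lemma convD_convX [DecidableEq σ] (i j : σ) :
    convD i (convX j) = Pi.single (M := fun _ ↦ convSeries σ ℂ) i 1 j := by
  apply Subtype.ext
  rw [coe_convD]
  change pderiv ℂ i (X j) = _
  rw [pderiv_X]
  rcases eq_or_ne j i with rfl | h
  · simp
  · simp [h]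

/-- **Hadamard's lemma** for convergent power series. -/
lemma mem_span_range_convX [Finite σ] {P : convSeries σ ℂ} (hP : constantCoeff P.1 = 0) :
    P ∈ Ideal.span (Set.range (convX (σ := σ))) := by
  have := Fintype.ofFinite σ
  let e : σ → σ →₀ ℕ := fun i ↦ Finsupp.single i 1
  obtain ⟨D, hdisj, hle, hcover⟩ := exists_pairwise_disjoint_subset_Ici (Set.range e)
  have hmem : ∀ i, divPart (e i) (D (e i)) P.1 ∈ convSeries σ ℂ := by
    intro i
    obtain ⟨r, hr, h⟩ := P.2
    have hle := (wnorm_divPart_mul_le (s := e i) (D := D (e i)) (w := fun α ↦ r ^ α.degree)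
      (fun α β ↦ by rw [map_add, pow_add]) P.1).trans
      (ENNReal.tsum_le_tsum fun α ↦ Set.indicator_le_self _ _ α)
    refine ⟨r, hr, fun htop ↦ h (top_le_iff.1 ?_)⟩
    rwa [htop, ENNReal.top_mul (by simp [hr.ne'])] at hle
  refine (Ideal.mem_span_range_iff_exists_fun).2 ⟨fun i ↦ ⟨_, hmem i⟩, Subtype.ext ?_⟩
  rw [AddSubmonoidClass.coe_finsetSum]
  ext α
  rw [map_sum]
  have hcoeff : ∀ i, coeff α (divPart (e i) (D (e i)) P.1 * X i) =
      (D (e i)).indicator (fun α ↦ coeff α P.1) α := fun i ↦ by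
    rw [mul_comm]
    exact coeff_monomial_mul_divPart (hle _) P.1 α
  refine (Finset.sum_congr rfl fun i _ ↦ hcoeff i).trans ?_
  rcases eq_or_ne α 0 with rfl | hα
  · refine (Finset.sum_eq_zero fun i _ ↦ ?_).trans hP.symm
    refine Set.indicator_of_notMem (fun h0 ↦ ?_) _
    simpa [e] using hle _ h0
  · obtain ⟨i, hi⟩ := Finsupp.ne_iff.1 hα
    obtain ⟨_, ⟨j, rfl⟩, hj⟩ := hcover (e i) ⟨i, rfl⟩ α
      (Finsupp.single_le_iff.2 (Nat.one_le_iff_ne_zero.2 hi))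
    have hne : ∀ k, k ≠ j → α ∉ D (e k) := fun k hk hαk ↦ Set.disjoint_left.1
      (hdisj ((Finsupp.single_left_injective one_ne_zero).ne hk)) hαk hj
    rw [Finset.sum_eq_single j (fun k _ hk ↦ Set.indicator_of_notMem (hne k hk) _) (by simp),
      Set.indicator_of_mem hj]

end PartialDerivatives

section Evaluation

open MvPowerSeries Topology

variable {σ : Type*}

lemma summable_norm_coeff_mul_pow {r : ℝ≥0} {P : MvPowerSeries σ ℂ} :
    wnorm (fun α ↦ r ^ α.degree) P ≠ ⊤ ↔ Summable fun α ↦ ‖coeff α P‖ * (r : ℝ) ^ α.degree := by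
  have h : wnorm (fun α ↦ r ^ α.degree) P =
      ∑' α, ((‖coeff α P‖₊ * r ^ α.degree : ℝ≥0) : ℝ≥0∞) :=
    tsum_congr fun α ↦ by rw [ENNReal.coe_mul, enorm_eq_nnnorm]
  rw [h, ENNReal.tsum_coe_ne_top_iff_summable, ← NNReal.summable_coe]
  simp

variable [Fintype σ]

/-- The sum at `x` of a convergent power series; a junk value where the series diverges. -/
noncomputable def convEval (x : σ → ℂ) (P : convSeries σ ℂ) : ℂ := ∑' α, coeff α P.1 * mon x α

lemma tsum_coeff_monomial_mul_mon (x : σ → ℂ) (α : σ →₀ ℕ) (c : ℂ) :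
    ∑' β, coeff β (monomial α c) * mon x β = c * mon x α := by
  classical
  rw [tsum_eq_single α fun β hβ ↦ by rw [coeff_monomial_ne hβ, zero_mul], coeff_monomial_same]

lemma convEval_algebraMap (x : σ → ℂ) (c : ℂ) : convEval x (algebraMap ℂ _ c) = c :=
  (tsum_coeff_monomial_mul_mon x 0 c).trans (by rw [mon_zero, mul_one])

lemma convEval_convX (x : σ → ℂ) (i : σ) : convEval x (convX i) = x i :=
  (tsum_coeff_monomial_mul_mon x (Finsupp.single i 1) 1).trans (by rw [mon_single, one_mul])

lemma convEval_zero_left (P : convSeries σ ℂ) : convEval 0 P = constantCoeff P.1 := by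
  classical
  rw [convEval, tsum_eq_single 0, mon_zero, mul_one, coeff_zero_eq_constantCoeff_apply]
  intro α hα
  obtain ⟨i, hi⟩ := Finsupp.ne_iff.1 hα
  rw [mon, Finset.prod_eq_zero (Finset.mem_univ i) (by simpa using hi), mul_zero]

lemma eventually_summable_norm_convEval (P : convSeries σ ℂ) :
    ∀ᶠ x in 𝓝 (0 : σ → ℂ), Summable fun α ↦ ‖coeff α P.1 * mon x α‖ := by
  obtain ⟨r, hr, hP⟩ := P.2
  filter_upwards [Metric.ball_mem_nhds (0 : σ → ℂ) (NNReal.coe_pos.2 hr)] with x hx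
  refine (summable_norm_coeff_mul_pow.1 hP).of_nonneg_of_le (fun _ ↦ norm_nonneg _) fun α ↦ ?_
  rw [norm_mul]
  gcongr
  refine (norm_mon_le x α).trans ?_
  gcongr
  exact (mem_ball_zero_iff.1 hx).le

lemma eventually_convEval_add (P Q : convSeries σ ℂ) :
    ∀ᶠ x in 𝓝 0, convEval x (P + Q) = convEval x P + convEval x Q := by
  filter_upwards [eventually_summable_norm_convEval P, eventually_summable_norm_convEval Q]
    with x hP hQ
  rw [convEval, convEval, convEval, ← hP.of_norm.tsum_add hQ.of_norm]
  simp [add_mul]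

lemma tsum_mul_tsum_eq_tsum_antidiagonal_of_summable_norm {A R : Type*} [AddCommMonoid A]
    [Finset.HasAntidiagonal A] [NormedRing R] [CompleteSpace R] {f g : A → R}
    (hf : Summable fun a ↦ ‖f a‖) (hg : Summable fun a ↦ ‖g a‖) :
    (∑' a, f a) * ∑' a, g a =
      ∑' a, ∑ p ∈ Finset.HasAntidiagonal.antidiagonal a, f p.1 * g p.2 :=
  hf.of_norm.tsum_mul_tsum_eq_tsum_sum_antidiagonal hg.of_norm (summable_mul_of_summable_norm hf hg)

lemma eventually_convEval_mul (P Q : convSeries σ ℂ) :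
    ∀ᶠ x in 𝓝 0, convEval x (P * Q) = convEval x P * convEval x Q := by
  classical
  filter_upwards [eventually_summable_norm_convEval P, eventually_summable_norm_convEval Q]
    with x hP hQ
  rw [convEval, convEval, convEval, tsum_mul_tsum_eq_tsum_antidiagonal_of_summable_norm hP hQ]
  refine tsum_congr fun α ↦ ?_
  rw [MulMemClass.coe_mul, coeff_mul, Finset.sum_mul]
  refine Finset.sum_congr rfl fun p hp ↦ ?_
  rw [← Finset.HasAntidiagonal.mem_antidiagonal.1 hp, mon_add]
  ring

lemma hasFDerivAt_mon (α : σ →₀ ℕ) (x : σ → ℂ) : HasFDerivAt (fun y ↦ mon y α)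
    (∑ i, ((α i : ℂ) * mon x (α - Finsupp.single i 1)) •
      (ContinuousLinearMap.proj i : (σ → ℂ) →L[ℂ] ℂ)) x := by
  classical
  have h := HasFDerivAt.finsetProd (u := Finset.univ) (x := x) (g := fun i (y : σ → ℂ) ↦ y i ^ α i)
    fun i _ ↦ ((ContinuousLinearMap.proj i : (σ → ℂ) →L[ℂ] ℂ).hasFDerivAt (x := x)).pow (α i)
  refine h.congr_fderiv (Finset.sum_congr rfl fun i _ ↦ ?_)
  rw [smul_smul, mon, ← Finset.mul_prod_erase _ _ (Finset.mem_univ i)]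
  have herase : ∏ j ∈ Finset.univ.erase i, x j ^ (α - Finsupp.single i 1 : σ →₀ ℕ) j =
      ∏ j ∈ Finset.univ.erase i, x j ^ α j :=
    Finset.prod_congr rfl fun j hj ↦ by
      rw [Finsupp.tsub_apply, Finsupp.single_eq_of_ne (Finset.ne_of_mem_erase hj), tsub_zero]
  rw [herase, Finsupp.tsub_apply, Finsupp.single_eq_same, ContinuousLinearMap.proj_apply,
    nsmul_eq_mul]
  congr 1
  ring

lemma norm_mul_mon_tsub_single_le {r : ℝ≥0} (hr : 0 < r) {x : σ → ℂ} (hx : ‖x‖ ≤ r / 2)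
    (α : σ →₀ ℕ) (i : σ) :
    ‖(α i : ℂ) * mon x (α - Finsupp.single i 1)‖ ≤ (r : ℝ)⁻¹ * r ^ α.degree := by
  by_cases h : α i = 0
  · simp only [h, Nat.cast_zero, zero_mul, norm_zero]
    positivity
  obtain ⟨β, rfl⟩ := exists_add_of_le (Finsupp.single_le_iff.2 (Nat.one_le_iff_ne_zero.2 h))
  rw [add_comm, add_tsub_cancel_right, Finsupp.add_apply, Finsupp.single_eq_same, norm_mul,
    Complex.norm_natCast]
  calc ((β i + 1 : ℕ) : ℝ) * ‖mon x β‖ ≤ (β i + 1 : ℕ) * (r / 2) ^ β.degree := by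
        gcongr
        exact (norm_mon_le x β).trans (by gcongr)
    _ ≤ _ := mod_cast succ_mul_half_pow_degree_le hr β i

lemma tsum_coeff_mul_mon_tsub_single (i : σ) (P : convSeries σ ℂ) (x : σ → ℂ) :
    ∑' α : σ →₀ ℕ, coeff α P.1 * (α i * mon x (α - Finsupp.single i 1)) =
      convEval x (convD i P) := by
  have hinj : Function.Injective fun β : σ →₀ ℕ ↦ β + Finsupp.single i 1 := add_left_injective _
  rw [← hinj.tsum_eq, convEval]
  · refine tsum_congr fun β ↦ ?_
    rw [coe_convD, coeff_pderiv, add_tsub_cancel_right, Finsupp.add_apply, Finsupp.single_eq_same]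
    push_cast
    ring
  · intro α hα
    have h0 : α i ≠ 0 := fun h0 ↦ hα (by simp [h0])
    exact ⟨α - Finsupp.single i 1,
      tsub_add_cancel_of_le (Finsupp.single_le_iff.2 (Nat.one_le_iff_ne_zero.2 h0))⟩

lemma eventually_hasFDerivAt_convEval (P : convSeries σ ℂ) :
    ∀ᶠ x in 𝓝 0, HasFDerivAt (convEval · P)
      (∑ i, convEval x (convD i P) • (ContinuousLinearMap.proj i : (σ → ℂ) →L[ℂ] ℂ)) x := by
  obtain ⟨r, hr, hP⟩ := P.2
  let a : σ → (σ → ℂ) → (σ →₀ ℕ) → ℂ := fun i y α ↦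
    coeff α P.1 * (α i * mon y (α - Finsupp.single i 1))
  let u : (σ →₀ ℕ) → ℝ := fun α ↦ (r : ℝ)⁻¹ * (‖coeff α P.1‖ * (r : ℝ) ^ α.degree)
  have hu : Summable u := (summable_norm_coeff_mul_pow.1 hP).mul_left _
  have ha : ∀ y ∈ Metric.ball (0 : σ → ℂ) (r / 2), ∀ i α, ‖a i y α‖ ≤ u α := by
    intro y hy i α
    rw [norm_mul, show u α = _ from mul_left_comm _ _ _]
    gcongr
    exact norm_mul_mon_tsub_single_le hr (mem_ball_zero_iff.1 hy).le α i
  have hproj : ∀ i, ‖(ContinuousLinearMap.proj i : (σ → ℂ) →L[ℂ] ℂ)‖ ≤ 1 := fun i ↦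
    ContinuousLinearMap.opNorm_le_bound _ zero_le_one fun y ↦ by simpa using norm_le_pi_norm y i
  have hr2 : (0 : ℝ) < r / 2 := by positivity
  filter_upwards [Metric.ball_mem_nhds 0 hr2] with x hx
  have h := hasFDerivAt_tsum_of_isPreconnected (summable_sum fun (_ : σ) _ ↦ hu)
    Metric.isOpen_ball (convex_ball _ _).isPreconnected
    (f := fun α y ↦ coeff α P.1 * mon y α)
    (f' := fun α y ↦ ∑ i, a i y α • (ContinuousLinearMap.proj i : (σ → ℂ) →L[ℂ] ℂ))
    (fun α y _ ↦ ((hasFDerivAt_mon α y).const_mul _).congr_fderiv <| by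
      simp only [Finset.smul_sum, smul_smul, a])
    (fun α y hy ↦ norm_sum_le_of_le _ fun i _ ↦ by
      rw [norm_smul]
      exact (mul_le_of_le_one_right (norm_nonneg _) (hproj i)).trans (ha y hy i α))
    (Metric.mem_ball_self hr2) (eventually_summable_norm_convEval P).self_of_nhds.of_norm hx
  refine h.congr_fderiv ?_
  have hsum : ∀ i, Summable (a i x) := fun i ↦ .of_norm_bounded hu (ha x hx i)
  rw [Summable.tsum_finsetSum fun i _ ↦ (hsum i).smul_const _]
  refine Finset.sum_congr rfl fun i _ ↦ ?_
  rw [(hsum i).tsum_smul_const, tsum_coeff_mul_mon_tsub_single]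

lemma contDiffAt_convEval (m : ℕ) (P : convSeries σ ℂ) : ContDiffAt ℂ m (convEval · P) 0 := by
  induction m generalizing P with
  | zero =>
    exact contDiffAt_zero.2 ⟨_, eventually_hasFDerivAt_convEval P,
      fun x hx ↦ HasFDerivAt.continuousAt hx |>.continuousWithinAt⟩
  | succ m ih =>
    push_cast
    exact contDiffAt_succ_iff_hasFDerivAt.2 ⟨_, ⟨_, eventually_hasFDerivAt_convEval P, fun _ ↦ id⟩,
      ContDiffAt.sum fun i _ ↦ (ih (convD i P)).smul contDiffAt_const⟩

lemma tendsto_convEval (P : convSeries σ ℂ) :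
    Tendsto (convEval · P) (𝓝 0) (𝓝 (constantCoeff P.1)) := by
  rw [← convEval_zero_left]
  exact (eventually_hasFDerivAt_convEval P).self_of_nhds.continuousAt

lemma exists_eventually_convEval_eq {f : (σ → ℂ) → ℂ} (hf : ∀ᶠ x in 𝓝 0, DifferentiableAt ℂ f x) :
    ∃ P : convSeries σ ℂ, ∀ᶠ x in 𝓝 0, convEval x P = f x := by
  have hbdd : ∀ᶠ x in 𝓝 0, ‖f x‖ < ‖f 0‖ + 1 :=
    hf.self_of_nhds.continuousAt.norm.eventually_lt_const (lt_add_one _)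
  obtain ⟨R, hR, hball⟩ := Metric.eventually_nhds_iff_ball.1 (hf.and hbdd)
  obtain ⟨c, hc, hsum⟩ := exists_hasSum_mon_smul hR (fun x hx ↦ (hball x hx).1)
    fun x hx ↦ (hball x hx).2.le
  have hr0 : 0 < R / 4 := by positivity
  let r : ℝ≥0 := ⟨R / 4, hr0.le⟩
  have hr : 2 / R * r = 1 / 2 := by
    change 2 / R * (R / 4) = 1 / 2
    field_simp
    norm_num
  have hconv : (c : MvPowerSeries σ ℂ) ∈ convSeries σ ℂ := by
    refine ⟨r, hr0, summable_norm_coeff_mul_pow.2 ?_⟩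
    refine ((summable_pow_degree σ (t := 1 / 2) (by norm_num) (by norm_num)).mul_left
      (‖f 0‖ + 1)).of_nonneg_of_le (fun α ↦ by positivity) fun α ↦ ?_
    rw [← hr, mul_pow, ← mul_assoc]
    gcongr
    exact hc α
  refine ⟨⟨c, hconv⟩, ?_⟩
  filter_upwards [Metric.ball_mem_nhds 0 (half_pos hR)] with x hx
  rw [← (hsum x hx).tsum_eq, convEval]
  exact tsum_congr fun α ↦ mul_comm _ _

lemma eventually_convEval_convD_eq [DecidableEq σ] {P : convSeries σ ℂ} {f : (σ → ℂ) → ℂ}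
    (h : ∀ᶠ x in 𝓝 0, convEval x P = f x) :
    ∀ᶠ x in 𝓝 0, ∀ i, convEval x (convD i P) = fderiv ℂ f x (Pi.single i 1) := by
  filter_upwards [eventually_hasFDerivAt_convEval P, h.eventually_nhds] with x hx hfx i
  rw [← EventuallyEq.fderiv_eq hfx, hx.fderiv]
  simp [Pi.single_apply]

end Evaluation

/-! ### The radial estimate -/

section ChainRule

open PowerSeries

variable {σ : Type*}

/-- A map satisfying the Leibniz rule is only constrained modulo every power of `X`, so no
continuity is needed: Hadamard's lemma gains one power of `X` at each step. -/
lemma linearMap_eq_zero_of_leibniz [Finite σ] {φ : convSeries σ ℂ →ₐ[ℂ] ℂ⟦X⟧}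
    (hφ : ∀ i, constantCoeff (φ (convX i)) = 0) {E : convSeries σ ℂ →ₗ[ℂ] ℂ⟦X⟧}
    (hE : ∀ P Q, E (P * Q) = φ P * E Q + φ Q * E P) (hX : ∀ i, E (convX i) = 0) : E = 0 := by
  have := Fintype.ofFinite σ
  have hone : E 1 = 0 := by simpa using hE 1 1
  have hconst : ∀ c : ℂ, E (algebraMap ℂ _ c) = 0 := fun c ↦ by
    rw [Algebra.algebraMap_eq_smul_one, map_smul, hone, smul_zero]
  have hdvd : ∀ N P, (X : ℂ⟦X⟧) ^ N ∣ E P := by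
    intro N
    induction N with
    | zero => simp
    | succ N ih =>
      intro P
      have hP : MvPowerSeries.constantCoeff
          (P - algebraMap ℂ _ (MvPowerSeries.constantCoeff P.1)).1 = 0 := by
        simp [MvPowerSeries.algebraMap_apply]
      obtain ⟨Q, hQ⟩ := Ideal.mem_span_range_iff_exists_fun.1 (mem_span_range_convX hP)
      have hEP : E P = ∑ i, φ (convX i) * E (Q i) := by
        rw [← sub_zero (E P), ← hconst, ← map_sub, ← hQ, map_sum]
        exact Finset.sum_congr rfl fun i _ ↦ by rw [hE, hX, mul_zero, zero_add]
      rw [hEP, pow_succ']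
      exact Finset.dvd_sum fun i _ ↦ mul_dvd_mul (X_dvd_iff.2 (hφ i)) (ih _)
  ext P n
  exact X_pow_dvd_iff.1 (hdvd (n + 1) P) n n.lt_succ_self

lemma derivative_arc [Fintype σ] {φ : convSeries σ ℂ →ₐ[ℂ] ℂ⟦X⟧}
    (hφ : ∀ i, constantCoeff (φ (convX i)) = 0) (P : convSeries σ ℂ) :
    derivative ℂ (φ P) = ∑ i, φ (convD i P) * derivative ℂ (φ (convX i)) := by
  classical
  let E : convSeries σ ℂ →ₗ[ℂ] ℂ⟦X⟧ := (derivative ℂ).toLinearMap ∘ₗ φ.toLinearMap -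
    ∑ i, LinearMap.mulRight ℂ (derivative ℂ (φ (convX i))) ∘ₗ φ.toLinearMap ∘ₗ (convD i).toLinearMap
  have hE : ∀ P, E P = derivative ℂ (φ P) - ∑ i, φ (convD i P) * derivative ℂ (φ (convX i)) := by
    simp [E]
  refine sub_eq_zero.1 ((hE P).symm.trans ?_)
  rw [linearMap_eq_zero_of_leibniz hφ (E := E) (fun P Q ↦ ?_) fun j ↦ ?_, LinearMap.zero_apply]
  · simp only [hE, Derivation.leibniz, map_mul, map_add, smul_eq_mul, add_mul, mul_sub,
      Finset.sum_add_distrib, Finset.mul_sum, mul_assoc]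
    ring
  · rw [hE, Finset.sum_eq_single j (fun i _ hij ↦ by
      rw [convD_convX, Pi.single_eq_of_ne hij.symm, map_zero, zero_mul]) (by simp),
      convD_convX, Pi.single_eq_same, map_one, one_mul, sub_self]

end ChainRule

section ConvergentGerms

open Topology

/-- Germs of functions into a commutative ring form an algebra over it, through constant functions. -/
noncomputable instance germAlgebra {ι R : Type*} [CommRing R] (l : Filter ι) :
    Algebra R (Germ l R) :=
  .ofModule (fun r f g ↦ Germ.inductionOn₂ f g fun f g ↦ congrArg Germ.ofFun (smul_mul_assoc r f g))
    fun r f g ↦ Germ.inductionOn₂ f g fun f g ↦ congrArg Germ.ofFun (mul_smul_comm r f g)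

variable {ι R : Type*} [TopologicalSpace R] {l : Filter ι}

lemma germ_tendsto_unique [T2Space R] [l.NeBot] {g : Germ l R} {a b : R}
    (ha : g.Tendsto (𝓝 a)) (hb : g.Tendsto (𝓝 b)) : a = b := by
  induction g using Germ.inductionOn
  exact tendsto_nhds_unique ha hb

variable [CommRing R]

lemma germ_tendsto_algebraMap (c : R) : (algebraMap R (Germ l R) c).Tendsto (𝓝 c) := by
  rw [Algebra.algebraMap_eq_smul_one]
  exact (tendsto_const_nhds (x := c • (1 : R)) (f := l)).trans_eq (by rw [smul_eq_mul, mul_one])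

variable [IsTopologicalRing R]

lemma germ_tendsto_add {f g : Germ l R} {a b : R} (hf : f.Tendsto (𝓝 a)) (hg : g.Tendsto (𝓝 b)) :
    (f + g).Tendsto (𝓝 (a + b)) := by
  induction f, g using Germ.inductionOn₂
  exact Tendsto.add hf hg

lemma germ_tendsto_mul {f g : Germ l R} {a b : R} (hf : f.Tendsto (𝓝 a)) (hg : g.Tendsto (𝓝 b)) :
    (f * g).Tendsto (𝓝 (a * b)) := by
  induction f, g using Germ.inductionOn₂
  exact Tendsto.mul hf hg

variable (R l) in
/-- The algebra of germs along `l` of convergent functions. -/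
def convGerm : Subalgebra R (Germ l R) where
  carrier := {g | ∃ c, g.Tendsto (𝓝 c)}
  mul_mem' := fun ⟨_, hf⟩ ⟨_, hg⟩ ↦ ⟨_, germ_tendsto_mul hf hg⟩
  add_mem' := fun ⟨_, hf⟩ ⟨_, hg⟩ ↦ ⟨_, germ_tendsto_add hf hg⟩
  algebraMap_mem' c := ⟨c, germ_tendsto_algebraMap c⟩

/-- The germ of a convergent function. -/
def toConvGerm {u : ι → R} {c : R} (hu : Tendsto u l (𝓝 c)) : convGerm R l :=
  ⟨(u : Germ l R), c, hu⟩

variable [T2Space R] [l.NeBot]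

/-- The limit of the germ of a convergent function. -/
noncomputable def germLim : convGerm R l →ₐ[R] R where
  toFun g := g.2.choose
  map_one' := germ_tendsto_unique (1 : convGerm R l).2.choose_spec (tendsto_const_nhds (f := l))
  map_zero' := germ_tendsto_unique (0 : convGerm R l).2.choose_spec (tendsto_const_nhds (f := l))
  map_add' f g := germ_tendsto_unique (f + g).2.choose_spec
    (germ_tendsto_add f.2.choose_spec g.2.choose_spec)
  map_mul' f g := germ_tendsto_unique (f * g).2.choose_spec
    (germ_tendsto_mul f.2.choose_spec g.2.choose_spec)
  commutes' c := germ_tendsto_unique (algebraMap R (convGerm R l) c).2.choose_spec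
    (germ_tendsto_algebraMap c)

lemma germLim_toConvGerm {u : ι → R} {c : R} (hu : Tendsto u l (𝓝 c)) :
    germLim (toConvGerm hu) = c :=
  germ_tendsto_unique (toConvGerm hu).2.choose_spec hu

end ConvergentGerms

section Evaluation

open Topology

variable {ι σ : Type*} [Fintype σ] {l : Filter ι} {x : ι → σ → ℂ}

/-- Evaluation of convergent power series along a family of points tending to `0`. -/
noncomputable def convEvalGerm (hx : Tendsto x l (𝓝 0)) : convSeries σ ℂ →ₐ[ℂ] convGerm ℂ l :=
  AlgHom.ofLinearMap
  { toFun P := toConvGerm ((tendsto_convEval P).comp hx)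
    map_add' P Q := Subtype.ext (Germ.coe_eq.2 (hx.eventually (eventually_convEval_add P Q)))
    map_smul' c P := Subtype.ext (Germ.coe_eq.2 (by
      filter_upwards [hx.eventually (eventually_convEval_mul (algebraMap ℂ _ c) P)] with k hk
      rw [← Algebra.smul_def, convEval_algebraMap] at hk
      exact hk)) }
  (Subtype.ext (Germ.coe_eq.2 (.of_forall fun k ↦ by
    exact (congrArg (convEval (x k)) (map_one _).symm).trans (convEval_algebraMap (x k) 1))))
  fun P Q ↦ Subtype.ext (Germ.coe_eq.2 (hx.eventually (eventually_convEval_mul P Q)))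

lemma germLim_convEvalGerm [l.NeBot] (hx : Tendsto x l (𝓝 0)) (P : convSeries σ ℂ) :
    germLim (convEvalGerm hx P) = MvPowerSeries.constantCoeff P.1 :=
  germLim_toConvGerm ((tendsto_convEval P).comp hx)

end Evaluation

section ArcsFromGerms

open PowerSeries Topology

lemma exists_isNoetherianRing_subalgebra {k R S : Type*} [CommRing k] [CommRing R] [CommRing S]
    [Algebra k R] [Algebra k S] [IsNoetherianRing R] (z : R →ₐ[k] S) {s : Set S} (hs : s.Finite) :
    ∃ B : Subalgebra k S, IsNoetherianRing B ∧ (∀ P, z P ∈ B) ∧ s ⊆ B := by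
  have := hs.to_subtype
  refine ⟨(MvPolynomial.aevalTower z ((↑) : s → S)).range, inferInstance, fun P ↦ ?_, fun a ha ↦ ?_⟩
  · exact ⟨MvPolynomial.C P, MvPolynomial.aevalTower_C ..⟩
  · exact ⟨MvPolynomial.X ⟨a, ha⟩, MvPolynomial.aevalTower_X ..⟩

lemma exists_formal_arc_of_germs {ι : Type*} {l : Ultrafilter ι}
    {B : Subalgebra ℂ (convGerm ℂ (l : Filter ι))} [IsNoetherianRing B] {h : B} (hh : h ≠ 0) :
    ∃ φ : B →ₐ[ℂ] ℂ⟦X⟧, (∀ b, constantCoeff (φ b) = germLim b.1) ∧ φ h ≠ 0 :=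
  exists_formal_arc (A := B) (germLim.comp B.val) hh

end ArcsFromGerms

section Orders

open PowerSeries

variable {k : Type*} [Field k]

lemma toNat_order_le_of_dvd {F G : k⟦X⟧} (h : F ∣ G) (hG : G ≠ 0) :
    F.order.toNat ≤ G.order.toNat := by
  obtain ⟨H, rfl⟩ := h
  exact ENat.toNat_le_toNat ((order_mul F H).ge.trans' le_self_add) (order_eq_top.not.2 hG)

/-- `ord F` is the value at `0` of `X F' / F`. -/
lemma exists_X_mul_derivative_eq (F : k⟦X⟧) :
    ∃ q : k⟦X⟧, X * derivative k F = F * q ∧ constantCoeff q = F.order.toNat := by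
  rcases eq_or_ne F 0 with rfl | hF
  · exact ⟨0, by simp⟩
  set m := F.order.toNat
  set u := divXPowOrder F
  have hu : constantCoeff u ≠ 0 := mt constantCoeff_divXPowOrder_eq_zero_iff.1 hF
  have hFu : X ^ m * u = F := X_pow_order_mul_divXPowOrder
  have hXm : X * derivative k (X ^ m) = (m : k⟦X⟧) * X ^ m := by
    rcases m with _ | m
    · simp
    · rw [Derivation.leibniz_pow, Nat.add_sub_cancel, derivative_X, nsmul_eq_mul, smul_eq_mul]
      ring
  refine ⟨(m : k⟦X⟧) + X * derivative k u * u⁻¹, ?_, by simp⟩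
  calc X * derivative k F = X ^ m * (X * derivative k u) + u * (X * derivative k (X ^ m)) := by
        rw [← hFu, Derivation.leibniz, smul_eq_mul, smul_eq_mul]
        ring
    _ = X ^ m * (X * derivative k u * (u * u⁻¹)) + u * ((m : k⟦X⟧) * X ^ m) := by
        rw [PowerSeries.mul_inv_cancel u hu, mul_one, hXm]
    _ = _ := by
        rw [← hFu]
        ring

variable {σ : Type*} [Fintype σ] {F G α β w : k⟦X⟧} {x y D τ : σ → k⟦X⟧}

lemma constantCoeff_mul_order_eq_sum (hF : F ≠ 0) (hG : G ≠ 0)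
    (hF' : derivative k F = ∑ i, D i * derivative k (x i))
    (hD : ∀ i, β * G * D i = α * F * y i) (hxy : ∀ i, x i * y i = G * τ i) :
    constantCoeff β * F.order.toNat =
      constantCoeff α * ∑ i, constantCoeff (τ i) * (x i).order.toNat := by
  obtain ⟨p, hp, hp0⟩ := exists_X_mul_derivative_eq F
  choose q hq hq0 using fun i ↦ exists_X_mul_derivative_eq (x i)
  have key : F * G * (β * p) = F * G * (α * ∑ i, τ i * q i) :=
    calc F * G * (β * p) = ∑ i, β * G * D i * (X * derivative k (x i)) := by
          rw [show F * G * (β * p) = β * G * (F * p) by ring, ← hp, hF', Finset.mul_sum,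
            Finset.mul_sum]
          exact Finset.sum_congr rfl fun i _ ↦ by ring
      _ = ∑ i, α * F * (x i * y i) * q i :=
          Finset.sum_congr rfl fun i _ ↦ by rw [hD, hq]; ring
      _ = F * G * (α * ∑ i, τ i * q i) := by
          simp only [hxy, Finset.mul_sum]
          exact Finset.sum_congr rfl fun i _ ↦ by ring
  simpa [hp0, hq0] using
    congrArg constantCoeff (mul_left_cancel₀ (mul_ne_zero hF hG) key)

variable {F G α β w : ℂ⟦X⟧} {x y D τ : σ → ℂ⟦X⟧} {t : σ → ℝ} {N : ℕ}

lemma sum_mul_order_mem_Icc (hG : G ≠ 0) (hx0 : ∀ i, constantCoeff (x i) = 0)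
    (hxy : ∀ i, x i * y i = G * τ i) (hτ : ∀ i, constantCoeff (τ i) = t i)
    (ht : t ∈ stdSimplex ℝ σ) :
    ∑ i, t i * (x i).order.toNat ∈ Set.Icc (1 : ℝ) G.order.toNat := by
  have hord : ∀ i, t i ≠ 0 → 1 ≤ (x i).order.toNat ∧ (x i).order.toNat ≤ G.order.toNat := by
    intro i hi
    have hτi : IsUnit (τ i) := isUnit_iff_constantCoeff.2 (by simpa [hτ] using hi)
    have hdvd : x i ∣ G := hτi.dvd_mul_right.1 ⟨y i, (hxy i).symm⟩
    have h1 := toNat_order_le_of_dvd (X_dvd_iff.2 (hx0 i)) (ne_zero_of_dvd_ne_zero hG hdvd)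
    rw [order_X] at h1
    exact ⟨h1, toNat_order_le_of_dvd hdvd hG⟩
  have hterm : ∀ i, t i * 1 ≤ t i * (x i).order.toNat ∧
      t i * (x i).order.toNat ≤ t i * G.order.toNat := by
    intro i
    rcases eq_or_ne (t i) 0 with h | h
    · simp [h]
    · exact ⟨mul_le_mul_of_nonneg_left (mod_cast (hord i h).1) (ht.1 i),
        mul_le_mul_of_nonneg_left (mod_cast (hord i h).2) (ht.1 i)⟩
  constructor
  · simpa [ht.2] using Finset.sum_le_sum fun i (_ : i ∈ Finset.univ) ↦ (hterm i).1
  · simpa [← Finset.sum_mul, ht.2] using Finset.sum_le_sum fun i (_ : i ∈ Finset.univ) ↦ (hterm i).2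

lemma mul_norm_constantCoeff_le (hF : F ≠ 0) (hG : G ≠ 0) (hF0 : constantCoeff F = 0)
    (hx0 : ∀ i, constantCoeff (x i) = 0)
    (hF' : derivative ℂ F = ∑ i, D i * derivative ℂ (x i))
    (hD : ∀ i, β * G * D i = α * F * y i) (hxy : ∀ i, x i * y i = G * τ i)
    (hτ : ∀ i, constantCoeff (τ i) = t i) (ht : t ∈ stdSimplex ℝ σ)
    (hw : α * F = α * w * G ^ N) (hαβ : constantCoeff α ≠ 0 ∨ constantCoeff β ≠ 0) :
    constantCoeff β ≠ 0 ∧ N * ‖constantCoeff β‖ ≤ ‖constantCoeff α‖ := by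
  set a := constantCoeff α
  set b := constantCoeff β
  set m := F.order.toNat
  set c := G.order.toNat
  set S : ℝ := ∑ i, t i * (x i).order.toNat with hS
  obtain ⟨hS1, hSc⟩ : 1 ≤ S ∧ S ≤ c := sum_mul_order_mem_Icc hG hx0 hxy hτ ht
  have hbaS : b * m = a * S := by
    simpa only [hτ, hS, Complex.ofReal_sum, Complex.ofReal_mul, Complex.ofReal_natCast] using
      constantCoeff_mul_order_eq_sum hF hG hF' hD hxy
  have hm : m ≠ 0 := by
    have h1 := toNat_order_le_of_dvd (X_dvd_iff.2 hF0) hF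
    rw [order_X] at h1
    exact Nat.one_le_iff_ne_zero.1 h1
  have hS0 : (S : ℂ) ≠ 0 := Complex.ofReal_ne_zero.2 (by positivity)
  have ha : a ≠ 0 := fun ha ↦ hαβ.elim (· ha) fun hb ↦
    mul_ne_zero hb (Nat.cast_ne_zero.2 hm) (by rw [hbaS, ha, zero_mul])
  have hb : b ≠ 0 := fun hb ↦ mul_ne_zero ha hS0 (by rw [← hbaS, hb, zero_mul])
  have hα : α ≠ 0 := fun h ↦ ha (by simp [a, h])
  have hNc : N * c ≤ m := by
    have hdvd : G ^ N ∣ F := ⟨w, mul_left_cancel₀ hα (by rw [hw]; ring)⟩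
    simpa [order_pow] using toNat_order_le_of_dvd hdvd hF
  refine ⟨hb, le_of_mul_le_mul_right ?_ (hS1.trans hSc |> zero_lt_one.trans_le)⟩
  calc N * ‖b‖ * c = (N * c : ℕ) * ‖b‖ := by push_cast; ring
    _ ≤ m * ‖b‖ := by gcongr
    _ = ‖a‖ * S := by
      rw [mul_comm, ← Complex.norm_natCast m, ← norm_mul, hbaS, norm_mul, Complex.norm_real,
        Real.norm_of_nonneg (by positivity)]
    _ ≤ ‖a‖ * c := by gcongr

end Orders

section RadialEstimate

open PowerSeries Topology

variable {ι σ : Type*} [Fintype σ] {l : Ultrafilter ι}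

lemma mul_norm_germLim_le {z : convSeries σ ℂ →ₐ[ℂ] convGerm ℂ (l : Filter ι)}
    (hz : ∀ i, germLim (z (convX i)) = 0) {P : convSeries σ ℂ} (hP : z P ≠ 0)
    (hP0 : germLim (z P) = 0) {g α β w : convGerm ℂ (l : Filter ι)}
    {y τ : σ → convGerm ℂ (l : Filter ι)} {t : σ → ℝ} {N : ℕ} (hg : g ≠ 0)
    (hD : ∀ i, β * g * z (convD i P) = α * z P * y i) (hxy : ∀ i, z (convX i) * y i = g * τ i)
    (hτ : ∀ i, germLim (τ i) = t i) (ht : t ∈ stdSimplex ℝ σ) (hw : α * z P = α * w * g ^ N)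
    (hαβ : germLim α ≠ 0 ∨ germLim β ≠ 0) :
    germLim β ≠ 0 ∧ N * ‖germLim β‖ ≤ ‖germLim α‖ := by
  obtain ⟨B, _, hzB, hB⟩ := exists_isNoetherianRing_subalgebra z (s := {g, α, β, w} ∪
    Set.range y ∪ Set.range τ) (((Set.toFinite _).union (Set.finite_range y)).union
      (Set.finite_range τ))
  let zB : convSeries σ ℂ →ₐ[ℂ] B := z.codRestrict B hzB
  let g' : B := ⟨g, hB (by simp)⟩
  let α' : B := ⟨α, hB (by simp)⟩
  let β' : B := ⟨β, hB (by simp)⟩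
  let w' : B := ⟨w, hB (by simp)⟩
  let y' : σ → B := fun i ↦ ⟨y i, hB (by simp)⟩
  let τ' : σ → B := fun i ↦ ⟨τ i, hB (by simp)⟩
  have hne : zB P * g' ≠ 0 := mul_ne_zero (fun h ↦ hP (congrArg Subtype.val h))
    fun h ↦ hg (congrArg Subtype.val h)
  obtain ⟨φ, hφ, hφ0⟩ := exists_formal_arc_of_germs hne
  rw [map_mul, mul_ne_zero_iff] at hφ0
  have hx0 : ∀ i, constantCoeff ((φ.comp zB) (convX i)) = 0 := fun i ↦ (hφ _).trans (hz i)
  have h := mul_norm_constantCoeff_le (F := φ (zB P)) (G := φ g') (α := φ α') (β := φ β')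
    (w := φ w') (D := fun i ↦ φ (zB (convD i P))) (x := fun i ↦ φ (zB (convX i)))
    (y := fun i ↦ φ (y' i)) (τ := fun i ↦ φ (τ' i)) (N := N)
    hφ0.1 hφ0.2 ((hφ _).trans hP0) hx0 (derivative_arc hx0 P)
    (fun i ↦ by simpa only [map_mul] using congrArg φ (Subtype.ext (hD i) :
      β' * g' * zB (convD i P) = α' * zB P * y' i))
    (fun i ↦ by simpa only [map_mul] using congrArg φ (Subtype.ext (hxy i) :
      zB (convX i) * y' i = g' * τ' i))
    (fun i ↦ (hφ _).trans (hτ i)) ht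
    (by simpa only [map_mul, map_pow] using congrArg φ (Subtype.ext hw :
      α' * zB P = α' * w' * g' ^ N))
    (by simpa only [hφ] using hαβ)
  simpa only [hφ] using h

variable {x : ι → σ → ℂ}

lemma mul_norm_lim_le (hx : Tendsto x l (𝓝 0)) {P : convSeries σ ℂ}
    (hP : ∀ᶠ k in l, convEval (x k) P ≠ 0) (hP0 : MvPowerSeries.constantCoeff P.1 = 0)
    {g α β w : ι → ℂ} {y τ : σ → ι → ℂ} {a b c e : ℂ} {d : σ → ℂ} {t : σ → ℝ} {N : ℕ}
    (hα : Tendsto α l (𝓝 a)) (hβ : Tendsto β l (𝓝 b)) (hw : Tendsto w l (𝓝 c))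
    (hg : Tendsto g l (𝓝 e)) (hy : ∀ i, Tendsto (y i) l (𝓝 (d i)))
    (hτ : ∀ i, Tendsto (τ i) l (𝓝 (t i))) (ht : t ∈ stdSimplex ℝ σ)
    (hg0 : ∀ᶠ k in l, g k ≠ 0)
    (hD : ∀ i, ∀ᶠ k in l, β k * g k * convEval (x k) (convD i P) = α k * convEval (x k) P * y i k)
    (hxy : ∀ i, ∀ᶠ k in l, x k i * y i k = g k * τ i k)
    (hαw : ∀ᶠ k in l, α k * convEval (x k) P = α k * w k * g k ^ N) (hab : a ≠ 0 ∨ b ≠ 0) :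
    b ≠ 0 ∧ N * ‖b‖ ≤ ‖a‖ := by
  have h := mul_norm_germLim_le (z := convEvalGerm hx) (P := P) (α := toConvGerm hα)
    (β := toConvGerm hβ) (w := toConvGerm hw) (g := toConvGerm hg) (y := fun i ↦ toConvGerm (hy i))
    (τ := fun i ↦ toConvGerm (hτ i)) (t := t) (N := N)
    (fun i ↦ (germLim_convEvalGerm hx _).trans ?_) (fun h ↦ ?_)
    ((germLim_convEvalGerm hx P).trans hP0)
    (fun h ↦ ?_) (fun i ↦ Subtype.ext (Germ.coe_eq.2 (hD i)))
    (fun i ↦ Subtype.ext (Germ.coe_eq.2 ((hxy i).mono fun k hk ↦ ?_)))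
    (fun i ↦ germLim_toConvGerm _) ht (Subtype.ext (Germ.coe_eq.2 hαw))
    (by rwa [germLim_toConvGerm, germLim_toConvGerm])
  · rwa [germLim_toConvGerm, germLim_toConvGerm] at h
  · rw [← convEval_zero_left, convEval_convX, Pi.zero_apply]
  · obtain ⟨k, h1, h2⟩ := (hP.and (Germ.coe_eq.1 (congrArg Subtype.val h))).exists
    exact h1 h2
  · obtain ⟨k, h1, h2⟩ := (hg0.and (Germ.coe_eq.1 (congrArg Subtype.val h))).exists
    exact h1 h2
  · exact (congrArg (· * y i k) (convEval_convX (x k) i)).trans hk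

lemma exists_tendsto_of_isCompact {X : Type*} [TopologicalSpace X] {K : Set X} (hK : IsCompact K)
    {u : ι → X} (hu : ∀ᶠ k in l, u k ∈ K) : ∃ c ∈ K, Tendsto u l (𝓝 c) :=
  hK.ultrafilter_le_nhds (l.map u) (tendsto_principal.2 hu)

lemma exists_tendsto_eq_mul_pow {p : ι → Prop} {u v : ι → ℂ} {N : ℕ} (hv : ∀ᶠ k in l, v k ≠ 0)
    (huv : ∀ᶠ k in l, p k → ‖u k‖ ≤ ‖v k‖ ^ N) :
    ∃ (w : ι → ℂ) (c : ℂ), Tendsto w l (𝓝 c) ∧ ∀ᶠ k in l, p k → u k = w k * v k ^ N := by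
  classical
  let w : ι → ℂ := fun k ↦ if p k then u k / v k ^ N else 0
  obtain ⟨c, -, hw⟩ := exists_tendsto_of_isCompact (l := l) (u := w) (isCompact_closedBall 0 1) (by
    filter_upwards [huv] with k hk
    rw [mem_closedBall_zero_iff]
    by_cases h : p k
    · simpa [w, h] using div_le_one_of_le₀ (hk h) (by positivity)
    · simp [w, h])
  refine ⟨w, c, hw, hv.mono fun k hk h ↦ ?_⟩
  simp [w, h, hk]

lemma sum_norm_sq_ne_zero {x : σ → ℂ} (hx : x ≠ 0) : ∑ i, ‖x i‖ ^ 2 ≠ 0 := by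
  obtain ⟨i, hi⟩ := Function.ne_iff.1 hx
  exact mt (Finset.sum_eq_zero_iff_of_nonneg fun _ _ ↦ by positivity).1 fun h ↦
    hi (by simpa using h i (Finset.mem_univ i))

lemma norm_sq_div_sum_mem_stdSimplex {x : σ → ℂ} (hx : x ≠ 0) :
    (fun i ↦ ‖x i‖ ^ 2 / ∑ j, ‖x j‖ ^ 2) ∈ stdSimplex ℝ σ :=
  ⟨fun i ↦ by positivity, by rw [← Finset.sum_div, div_self (sum_norm_sq_ne_zero hx)]⟩

lemma tendsto_sum_norm_sq : Tendsto (fun x : σ → ℂ ↦ ∑ i, ‖x i‖ ^ 2) (𝓝 0) (𝓝 0) := by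
  have h : Continuous fun x : σ → ℂ ↦ ∑ i, ‖x i‖ ^ 2 := by fun_prop
  simpa using h.tendsto 0

variable [DecidableEq σ] {f : (σ → ℂ) → ℂ} {μ : ι → ℂ}

lemma mul_norm_limit_le (hf0 : f 0 = 0)
    (hf : ∀ᶠ x in 𝓝 0, DifferentiableAt ℂ f x) (hx : Tendsto x l (𝓝 0))
    (hfx : ∀ᶠ k in l, f (x k) ≠ 0)
    (hμ : ∀ᶠ k in l, ∀ i, fderiv ℂ f (x k) (Pi.single i 1) = μ k * conj (x k i))
    {M : ι → ℂ} {a b : ℂ} (ha : Tendsto (fun k ↦ μ k * (∑ i, ‖x k i‖ ^ 2 : ℝ) / M k) l (𝓝 a))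
    (hb : Tendsto (fun k ↦ f (x k) / M k) l (𝓝 b)) (hab : a ≠ 0 ∨ b ≠ 0) {N : ℕ}
    (hN : ∀ᶠ k in l, μ k ≠ 0 → ‖f (x k)‖ ≤ (∑ i, ‖x k i‖ ^ 2) ^ N) :
    b ≠ 0 ∧ N * ‖b‖ ≤ ‖a‖ := by
  obtain ⟨P, hP⟩ := exists_eventually_convEval_eq hf
  let g : ι → ℝ := fun k ↦ ∑ i, ‖x k i‖ ^ 2
  have hxne : ∀ᶠ k in l, x k ≠ 0 := hfx.mono fun k hk h0 ↦ hk (h0 ▸ hf0)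
  have hgne : ∀ᶠ k in l, (g k : ℂ) ≠ 0 :=
    hxne.mono fun k hk ↦ Complex.ofReal_ne_zero.2 (sum_norm_sq_ne_zero hk)
  have hg : Tendsto (fun k ↦ (g k : ℂ)) l (𝓝 0) := by
    simpa [Function.comp_def, g] using
      (Complex.continuous_ofReal.tendsto _).comp (tendsto_sum_norm_sq.comp hx)
  have hy : ∀ i, Tendsto (fun k ↦ conj (x k i)) l (𝓝 0) := fun i ↦ by
    simpa [Function.comp_def] using
      (Complex.continuous_conj.tendsto _).comp (tendsto_pi_nhds.1 hx i)
  obtain ⟨t, ht, hτ⟩ := exists_tendsto_of_isCompact (isCompact_stdSimplex ℝ σ)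
    (hxne.mono fun k ↦ norm_sq_div_sum_mem_stdSimplex)
  have hτ' : ∀ i, Tendsto (fun k ↦ ((‖x k i‖ ^ 2 / g k : ℝ) : ℂ)) l (𝓝 (t i)) := fun i ↦
    (Complex.continuous_ofReal.tendsto _).comp (tendsto_pi_nhds.1 hτ i)
  obtain ⟨w, c, hw, hwN⟩ := exists_tendsto_eq_mul_pow (p := fun k ↦ μ k ≠ 0)
    (u := fun k ↦ f (x k)) (N := N) hgne (hN.mono fun k hk h0 ↦ by
    rw [Complex.norm_real, Real.norm_of_nonneg (by positivity)]
    exact hk h0)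
  have hPx : ∀ᶠ k in l, convEval (x k) P = f (x k) := hx.eventually hP
  refine mul_norm_lim_le hx (P := P) (hfx.mp (hPx.mono fun k hk h ↦ hk.trans_ne h)) ?_ ha hb hw hg
    hy hτ' ht hgne (fun i ↦ ?_) (fun i ↦ hgne.mono fun k hk ↦ ?_) ?_ hab
  · rw [← convEval_zero_left, hP.self_of_nhds, hf0]
  · filter_upwards [hPx, hx.eventually (eventually_convEval_convD_eq hP), hμ] with k hP hD hμ
    rw [hP, hD, hμ]
    ring
  · rw [Complex.mul_conj', Complex.ofReal_div, mul_div_cancel₀ _ hk, Complex.ofReal_pow]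
  · filter_upwards [hPx, hwN] with k hP hk
    rw [hP]
    by_cases h0 : μ k = 0
    · simp [h0]
    · rw [hk h0]
      ring

lemma exists_not_eventually_norm_le_pow (hf0 : f 0 = 0)
    (hf : ∀ᶠ x in 𝓝 0, DifferentiableAt ℂ f x) (hx : Tendsto x l (𝓝 0))
    (hfx : ∀ᶠ k in l, f (x k) ≠ 0)
    (hμ : ∀ᶠ k in l, ∀ i, fderiv ℂ f (x k) (Pi.single i 1) = μ k * conj (x k i)) :
    ∃ N : ℕ, ¬ ∀ᶠ k in l, μ k ≠ 0 → ‖f (x k)‖ ≤ (∑ i, ‖x k i‖ ^ 2) ^ N := by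
  let v : ι → ℂ × ℂ := fun k ↦ (μ k * (∑ i, ‖x k i‖ ^ 2 : ℝ), f (x k))
  obtain ⟨⟨a, b⟩, hab, hlim⟩ := exists_tendsto_of_isCompact (l := l)
    (u := fun k ↦ (‖v k‖ : ℂ)⁻¹ • v k) (isCompact_sphere 0 1) (hfx.mono fun k hk ↦ by
      have hv : v k ≠ 0 := fun h ↦ hk (congrArg Prod.snd h)
      simp [norm_smul, hv])
  by_contra! h
  obtain ⟨N, hN⟩ := exists_nat_gt (‖a‖ / ‖b‖)
  obtain ⟨hb, hle⟩ := mul_norm_limit_le hf0 hf hx hfx hμ (M := fun k ↦ ‖v k‖) (a := a) (b := b)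
    (((continuous_fst.tendsto _).comp hlim).congr fun k ↦ inv_mul_eq_div _ _)
    (((continuous_snd.tendsto _).comp hlim).congr fun k ↦ inv_mul_eq_div _ _)
    (by
      by_contra! h0
      simp [h0.1, h0.2] at hab) (h N)
  exact hN.not_ge ((le_div_iff₀ (norm_pos_iff.2 hb)).2 hle)

theorem radial_estimate (hf0 : f 0 = 0) (hf : ∀ᶠ x in 𝓝 0, DifferentiableAt ℂ f x) :
    ∃ N : ℕ, ∀ᶠ x in 𝓝 0, f x ≠ 0 → ∀ μ, (∀ i, fderiv ℂ f x (Pi.single i 1) = μ * conj (x i)) →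
      (∑ i, ‖x i‖ ^ 2) ^ N ≤ ‖f x‖ ∧ μ ≠ 0 := by
  by_contra! h
  have hex : ∀ N : ℕ, ∃ x : σ → ℂ, ‖x‖ < 1 / ((N : ℝ) + 1) ∧ (∑ i, ‖x i‖ ^ 2) ≤ 1 ∧ f x ≠ 0 ∧
      ∃ μ, (∀ i, fderiv ℂ f x (Pi.single i 1) = μ * conj (x i)) ∧
        (μ ≠ 0 → ‖f x‖ < (∑ i, ‖x i‖ ^ 2) ^ N) := by
    intro N
    have hball : ∀ᶠ x : σ → ℂ in 𝓝 0, ‖x‖ < 1 / ((N : ℝ) + 1) ∧ (∑ i, ‖x i‖ ^ 2) ≤ 1 := by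
      have h1 : (0 : ℝ) < 1 / (N + 1) := by positivity
      filter_upwards [Metric.ball_mem_nhds 0 h1, tendsto_sum_norm_sq.eventually_le_const one_pos]
        with x hx hx1
      exact ⟨mem_ball_zero_iff.1 hx, hx1⟩
    obtain ⟨x, ⟨hfx, μ, hμ, hbad⟩, hx, hx1⟩ := ((h N).and_eventually hball).exists
    exact ⟨x, hx, hx1, hfx, μ, hμ, fun h0 ↦ not_le.1 fun hle ↦ h0 (hbad hle)⟩
  choose x hx hx1 hfx μ hμ hlt using hex
  have hx0 : Tendsto x (hyperfilter ℕ) (𝓝 0) :=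
    (squeeze_zero_norm (fun N ↦ (hx N).le) tendsto_one_div_add_atTop_nhds_zero_nat).mono_left
      Nat.hyperfilter_le_atTop
  obtain ⟨N, hN⟩ := exists_not_eventually_norm_le_pow hf0 hf hx0 (.of_forall hfx) (.of_forall hμ)
  refine hN ?_
  filter_upwards [Nat.hyperfilter_le_atTop (eventually_ge_atTop N)] with k hk h0
  exact (hlt k h0).le.trans (pow_le_pow_of_le_one (by positivity) (hx1 k) hk)

end RadialEstimate

/-! ### Lifting the rotation of the circle -/

section TangentialLift

open Topology Gradient

section Gram

variable (𝕜 : Type*) {E : Type*} [RCLike 𝕜] [NormedAddCommGroup E] [InnerProductSpace 𝕜 E]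
  {s : ℝ} {x y : E}

/-- `‖x‖²` times the vector obtained from `y` by removing the fraction `s` of its component along
`x`; the factor avoids a division by `‖x‖²`. -/
def partialReject (s : ℝ) (x y : E) : E :=
  ((‖x‖ ^ 2 : ℝ) : 𝕜) • y - ((s : 𝕜) * inner 𝕜 x y) • x

/-- The Gram determinant of `x` and `y` with its off-diagonal term weighted by `s`. -/
def partialGram (s : ℝ) (x y : E) : ℝ :=
  ‖x‖ ^ 2 * ‖y‖ ^ 2 - s * ‖inner 𝕜 x y‖ ^ 2

lemma inner_partialReject_left : inner 𝕜 y (partialReject 𝕜 s x y) = partialGram 𝕜 s x y := by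
  rw [partialReject, partialGram, inner_sub_right, inner_smul_right, inner_smul_right,
    inner_self_eq_norm_sq_to_K, mul_assoc, ← inner_conj_symm y x, RCLike.mul_conj]
  push_cast
  rfl

lemma inner_partialReject_one_right : inner 𝕜 x (partialReject 𝕜 1 x y) = 0 := by
  rw [partialReject, inner_sub_right, inner_smul_right, inner_smul_right,
    inner_self_eq_norm_sq_to_K]
  push_cast
  ring

lemma partialGram_pos (hx : x ≠ 0) (hy : y ≠ 0) (hs : s ≤ 1) (hxy : s = 1 → ∀ c : 𝕜, y ≠ c • x) :
    0 < partialGram 𝕜 s x y := by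
  have hpos : 0 < ‖x‖ ^ 2 * ‖y‖ ^ 2 := by positivity
  have hle : ‖inner 𝕜 x y‖ ^ 2 ≤ ‖x‖ ^ 2 * ‖y‖ ^ 2 := by
    rw [← mul_pow]
    gcongr
    exact norm_inner_le_norm x y
  rw [partialGram]
  rcases hs.lt_or_eq with hs | rfl
  · rcases le_or_gt s 0 with hs0 | hs0
    · linarith [mul_nonpos_of_nonpos_of_nonneg hs0 (sq_nonneg ‖inner 𝕜 x y‖)]
    · linarith [mul_le_mul_of_nonneg_left hle hs0.le, mul_lt_of_lt_one_left hpos hs]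
  · refine sub_pos.2 ((one_mul _).trans_lt (hle.lt_of_ne fun heq ↦ ?_))
    rw [← mul_pow, pow_left_inj₀ (norm_nonneg _) (by positivity) two_ne_zero] at heq
    obtain ⟨c, -, hc⟩ := (norm_inner_eq_norm_iff hx hy).1 heq
    exact hxy rfl c hc

end Gram

section Cutoff

variable {E F : Type*} [NormedAddCommGroup E] [NormedSpace ℝ E] [FiniteDimensional ℝ E]
  [NormedAddCommGroup F] [NormedSpace ℝ F]

lemma exists_contDiff_smul_hasCompactSupport {m : ℕ∞} {N O : Set E} (hN : IsClosed N)
    (hO : IsOpen O) (hOb : Bornology.IsBounded O) (hNO : N ⊆ O) {v : E → F}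
    (hv : ∀ x ∈ O, ContDiffAt ℝ m v x) :
    ∃ χ : E → ℝ, (∀ x ∈ N, χ x = 1) ∧ (∀ x ∉ O, χ x = 0) ∧
      ContDiff ℝ m (fun x ↦ χ x • v x) ∧ HasCompactSupport fun x ↦ χ x • v x := by
  obtain ⟨χ, hχ0, hχ1, -⟩ := exists_contMDiffMap_zero_one_nhds_of_isClosed (n := m)
    (modelWithCornersSelf ℝ E) hO.isClosed_compl hN
    (Set.disjoint_left.2 fun x hx hxN ↦ hx (hNO hxN))
  have hχO : ∀ x ∉ O, ∀ᶠ y in 𝓝 x, χ y = 0 := fun x hx ↦ hχ0.filter_mono (nhds_le_nhdsSet hx)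
  refine ⟨χ, fun x hx ↦ hχ1.self_of_nhdsSet x hx, fun x hx ↦ (hχO x hx).self_of_nhds,
    contDiff_iff_contDiffAt.2 fun x ↦ ?_, .intro hOb.isCompact_closure fun x hx ↦ ?_⟩
  · by_cases hx : x ∈ O
    · exact (contMDiff_iff_contDiff.1 χ.contMDiff).contDiffAt.smul (hv x hx)
    · exact contDiffAt_const (c := (0 : F)) |>.congr_of_eventuallyEq
        ((hχO x hx).mono fun y hy ↦ by simp [hy])
  · rw [(hχO x fun hxO ↦ hx (subset_closure hxO)).self_of_nhds, zero_smul]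

end Cutoff

section OuterCutoff

variable {E : Type*} [NormedAddCommGroup E] {ε : ℝ} {x : E}

/-- A smooth function equal to `1` outside the open ball of radius `ε` and less than `1` inside. -/
noncomputable def outerCutoff (ε : ℝ) (x : E) : ℝ :=
  Real.smoothTransition (‖x‖ ^ 2 / ε ^ 2)

lemma outerCutoff_eq_one_iff (hε : 0 < ε) : outerCutoff ε x = 1 ↔ ε ≤ ‖x‖ := by
  rw [outerCutoff, Real.smoothTransition.eq_one_iff_one_le, one_le_div (by positivity),
    pow_le_pow_iff_left₀ hε.le (norm_nonneg x) two_ne_zero]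

lemma contDiff_outerCutoff [InnerProductSpace ℂ E] {m : ℕ∞} :
    ContDiff ℝ m (outerCutoff (E := E) ε) :=
  Real.smoothTransition.contDiff.comp ((contDiff_norm_sq ℂ).div_const _)

end OuterCutoff

variable {E : Type*} [NormedAddCommGroup E] [InnerProductSpace ℂ E] [CompleteSpace E]
  {f : E → ℂ} {ε : ℝ} {x : E}

lemma contDiffAt_gradient {m n : WithTop ℕ∞} (hf : ContDiffAt ℂ n f x) (hmn : m + 1 ≤ n) :
    ContDiffAt ℝ m (∇ f) x := by
  let R : StrongDual ℂ E →L[ℝ] E :=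
    AddMonoidHom.toRealLinearMap ((InnerProductSpace.toDual ℂ E).symm : StrongDual ℂ E →+ E)
      (InnerProductSpace.toDual ℂ E).symm.continuous
  exact R.contDiff.contDiffAt.comp x ((hf.fderiv_right hmn).restrict_scalars ℝ)

/-- The value of `df` on the vector field of which `rotationLift` is a multiple. -/
noncomputable def liftDenominator (f : E → ℂ) (ε : ℝ) (x : E) : ℝ :=
  partialGram ℂ (outerCutoff ε x) x (∇ f x)

/-- The lift through `f` of the rotation field `w ↦ iw` along `∇ f`, corrected by means of
`outerCutoff` so as to be tangent to the spheres of radius at least `ε`. It is a lift only where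
`liftDenominator f ε` does not vanish. -/
noncomputable def rotationLift (f : E → ℂ) (ε : ℝ) (x : E) : E :=
  (Complex.I * f x / (liftDenominator f ε x : ℂ)) • partialReject ℂ (outerCutoff ε x) x (∇ f x)

lemma fderiv_rotationLift (hx : liftDenominator f ε x ≠ 0) :
    fderiv ℂ f x (rotationLift f ε x) = Complex.I * f x := by
  rw [rotationLift, map_smul, ← inner_gradient_left, inner_partialReject_left, smul_eq_mul]
  exact div_mul_cancel₀ _ (Complex.ofReal_ne_zero.2 hx)

lemma inner_rotationLift (hε : 0 < ε) (hx : ε ≤ ‖x‖) : inner ℂ x (rotationLift f ε x) = 0 := by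
  rw [rotationLift, (outerCutoff_eq_one_iff hε).2 hx, inner_smul_right,
    inner_partialReject_one_right, mul_zero]

lemma contDiffAt_liftDenominator {m : ℕ∞} (hf : ContDiffAt ℂ (m + 1) f x) :
    ContDiffAt ℝ m (liftDenominator f ε) x := by
  have hgrad := contDiffAt_gradient hf le_rfl
  exact ((contDiff_norm_sq ℂ).contDiffAt.mul (hgrad.norm_sq ℂ)).sub
    (contDiff_outerCutoff.contDiffAt.mul ((contDiffAt_id.inner ℂ hgrad).norm_sq ℂ))

lemma contDiffAt_rotationLift {m : ℕ∞} (hf : ContDiffAt ℂ (m + 1) f x)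
    (hx : liftDenominator f ε x ≠ 0) : ContDiffAt ℝ m (rotationLift f ε) x := by
  have hgrad := contDiffAt_gradient hf le_rfl
  have hofReal : ContDiff ℝ m ((↑) : ℝ → ℂ) := Complex.ofRealCLM.contDiff
  have hcoeff : ContDiffAt ℝ m (fun x ↦ Complex.I * f x / (liftDenominator f ε x : ℂ)) x :=
    (contDiffAt_const.mul ((hf.of_le le_self_add).restrict_scalars ℝ)).mul
      ((hofReal.contDiffAt.comp x (contDiffAt_liftDenominator hf)).inv
        (Complex.ofReal_ne_zero.2 hx))
  exact hcoeff.smul (((hofReal.comp (contDiff_norm_sq ℂ)).contDiffAt.smul hgrad).sub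
    (((hofReal.comp contDiff_outerCutoff).contDiffAt.mul (contDiffAt_id.inner ℂ hgrad)).smul
      contDiffAt_id))

lemma liftDenominator_pos (hε : 0 < ε) (hx : x ≠ 0) (hxε : ‖x‖ ≤ ε) (hreg : fderiv ℂ f x ≠ 0)
    (htrans : ‖x‖ = ε → ∀ μ : ℂ, ¬ ∀ v, fderiv ℂ f x v = μ * inner ℂ x v) :
    0 < liftDenominator f ε x := by
  refine partialGram_pos ℂ hx (fun h ↦ hreg ?_) (Real.smoothTransition.le_one _) fun h c hc ↦ ?_
  · rw [← toDual_gradient, h, map_zero]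
  · refine htrans (hxε.antisymm ((outerCutoff_eq_one_iff hε).1 h)) (conj c) fun v ↦ ?_
    rw [← inner_gradient_left, hc, inner_smul_left]

end TangentialLift

section Tube

open Topology Metric Complex

variable {E : Type*} [NormedAddCommGroup E] {f : E → ℂ} {ε ε₁ η : ℝ}

/-- The Milnor tube of `f` over the circle of radius `η`, in the closed ball of radius `ε`. -/
def milnorTube (f : E → ℂ) (ε η : ℝ) : Set E := {x ∈ closedBall 0 ε | ‖f x‖ = η}

lemma isClosed_milnorTube (hf : ContinuousOn f (closedBall 0 ε)) : IsClosed (milnorTube f ε η) :=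
  hf.norm.preimage_isClosed_of_isClosed isClosed_closedBall (isClosed_singleton (x := η))

lemma exists_lipschitzWith_lift [InnerProductSpace ℂ E] [FiniteDimensional ℂ E] (hε : 0 < ε)
    (hε₁ : ε < ε₁) (hf0 : f 0 = 0) (hη : 0 < η) (hf : ∀ x ∈ ball 0 ε₁, ContDiffAt ℂ 2 f x)
    (hreg : ∀ x ∈ milnorTube f ε η, fderiv ℂ f x ≠ 0)
    (htrans : ∀ x ∈ milnorTube f ε η, ‖x‖ = ε → ∀ μ : ℂ, ¬ ∀ v, fderiv ℂ f x v = μ * inner ℂ x v) :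
    ∃ (V : E → E) (χ : E → ℝ), (∃ K, LipschitzWith K V) ∧ (∃ C, ∀ x, ‖V x‖ ≤ C) ∧
      (∀ x ∈ milnorTube f ε η, χ x = 1) ∧
      (∀ x, fderiv ℂ f x (V x) = χ x * I * f x) ∧ ∀ x, ε ≤ ‖x‖ → inner ℂ x (V x) = 0 := by
  have : CompleteSpace E := FiniteDimensional.complete ℂ E
  have : FiniteDimensional ℝ E := FiniteDimensional.complexToReal E
  have htube : milnorTube f ε η ⊆ ball 0 ε₁ := fun x hx ↦ closedBall_subset_ball hε₁ hx.1
  let O : Set E := {x ∈ ball 0 ε₁ | liftDenominator f ε x ≠ 0}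
  have hden : ∀ x ∈ ball (0 : E) ε₁, ContDiffAt ℝ 1 (liftDenominator f ε) x := fun x hx ↦
    contDiffAt_liftDenominator (m := 1) (hf x hx)
  have hO : IsOpen O := isOpen_iff_mem_nhds.2 fun x hx ↦
    inter_mem (isOpen_ball.mem_nhds hx.1) ((hden x hx.1).continuousAt.eventually_ne hx.2)
  have hN : IsClosed (milnorTube f ε η) := isClosed_milnorTube fun x hx ↦
    (hf x (closedBall_subset_ball hε₁ hx)).continuousAt.continuousWithinAt
  have hNO : milnorTube f ε η ⊆ O := fun x hx ↦ ⟨htube hx, (liftDenominator_pos hε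
    (by rintro rfl; exact hη.ne (by simpa [hf0] using hx.2)) (mem_closedBall_zero_iff.1 hx.1)
    (hreg x hx) (htrans x hx)).ne'⟩
  obtain ⟨χ, hχ1, hχ0, hV, hVc⟩ := exists_contDiff_smul_hasCompactSupport (m := 1) hN hO
    (isBounded_ball.subset fun _ hx ↦ hx.1) hNO
    fun x hx ↦ contDiffAt_rotationLift (m := 1) (hf x hx.1) hx.2
  refine ⟨_, χ, hV.lipschitzWith_of_hasCompactSupport hVc one_ne_zero,
    hVc.exists_bound_of_continuous hV.continuous, hχ1, fun x ↦ ?_, fun x hx ↦ ?_⟩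
  · by_cases hxO : x ∈ O
    · rw [← Complex.coe_smul, map_smul, fderiv_rotationLift hxO.2, smul_eq_mul, mul_assoc]
    · simp [hχ0 x hxO]
  · rw [← Complex.coe_smul, inner_smul_right, inner_rotationLift hε hx, mul_zero]

lemma le_of_hasDerivAt_of_deriv_eq_zero {u u' : ℝ → ℝ} {a s : ℝ}
    (hu : ∀ t, HasDerivAt u (u' t) t) (hu' : ∀ t, a ≤ u t → u' t = 0) (hs : u s ≤ a) (t : ℝ) :
    u t ≤ a := by
  wlog hst : s ≤ t generalizing u u' s t
  · have h := this (s := -s) (t := -t) (u := fun r ↦ u (-r)) (u' := fun r ↦ -u' (-r))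
      (fun r ↦ by simpa [Function.comp_def] using (hu (-r)).comp r (hasDerivAt_neg r))
      (fun r hr ↦ by rw [hu' _ hr, neg_zero]) (by simpa using hs) (by linarith)
    simpa using h
  by_contra! ht
  obtain ⟨δ, hδ, hδt⟩ := exists_pos_mul_lt (sub_pos.2 ht) (t - s)
  have hbarrier : u t ≤ a + (t - s) * δ := image_le_of_deriv_right_lt_deriv_boundary
    (B := fun r ↦ a + (r - s) * δ) (B' := fun _ ↦ δ)
    (fun r _ ↦ (hu r).continuousAt.continuousWithinAt) (fun r _ ↦ (hu r).hasDerivWithinAt)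
    (by simpa using hs)
    (fun r ↦ by simpa using (((hasDerivAt_id r).sub_const s).mul_const δ).const_add a)
    (fun r hr hur ↦ (hu' r (by rw [hur]; nlinarith [hr.1])).trans_lt hδ) ⟨hst, le_rfl⟩
  linarith

lemma norm_le_of_isIntegralCurve [InnerProductSpace ℂ E] (hε : 0 ≤ ε) {V : E → E} {γ : ℝ → E}
    (hV : ∀ x, ε ≤ ‖x‖ → inner ℂ x (V x) = 0) (hγ : IsIntegralCurve γ fun _ ↦ V) {s : ℝ}
    (hs : ‖γ s‖ ≤ ε) (t : ℝ) : ‖γ t‖ ≤ ε := by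
  let _ : InnerProductSpace ℝ E := InnerProductSpace.rclikeToReal ℂ E
  have hsq : ‖γ t‖ ^ 2 ≤ ε ^ 2 := by
    refine le_of_hasDerivAt_of_deriv_eq_zero (s := s) (fun t ↦ (hγ t).norm_sq) (fun t ht ↦ ?_)
      (by gcongr) t
    rw [real_inner_eq_re_inner ℂ, hV _ (by simpa [abs_of_nonneg hε] using sq_le_sq.1 ht), map_zero,
      mul_zero]
  simpa [abs_of_nonneg hε] using sq_le_sq.1 hsq

lemma norm_eq_of_hasDerivAt_I_mul {u : ℝ → ℂ} {c : ℝ → ℝ}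
    (hu : ∀ t, HasDerivAt u (c t * I * u t) t) (s t : ℝ) : ‖u s‖ = ‖u t‖ := by
  have hsq : ∀ t, HasDerivAt (fun t ↦ ‖u t‖ ^ 2) 0 t := fun t ↦ by
    have horth : inner ℝ (u t) (c t * I * u t) = 0 := by
      rw [Complex.inner]
      simp
      ring
    simpa [horth] using (hu t).norm_sq
  exact (pow_left_inj₀ (norm_nonneg _) (norm_nonneg _) two_ne_zero).1
    (is_const_of_deriv_eq_zero (fun t ↦ (hsq t).differentiableAt) (fun t ↦ (hsq t).deriv) s t)

lemma eq_exp_mul_of_hasDerivAt {u : ℝ → ℂ} {a : ℂ} (hu : ∀ t, HasDerivAt u (a * u t) t) (t : ℝ) :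
    u t = exp (t * a) * u 0 := by
  have hexp : ∀ t : ℝ, HasDerivAt (fun t : ℝ ↦ exp (t * a) * u 0) (a * (exp (t * a) * u 0)) t :=
    fun t ↦ by
      have := ((ofRealCLM.hasDerivAt (x := t)).mul_const a).cexp.mul_const (u 0)
      simpa [mul_comm, mul_left_comm, mul_assoc] using this
  exact congrFun (ODE_solution_unique_univ (v := fun _ z ↦ a * z) (s := fun _ ↦ Set.univ)
    (fun _ ↦ (ContinuousLinearMap.mul ℂ ℂ a).lipschitz.lipschitzOnWith)
    (fun t ↦ ⟨hu t, trivial⟩) (fun t ↦ ⟨hexp t, trivial⟩) (t₀ := 0) (by simp)) t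

lemma milnorTube_of_isIntegralCurve [InnerProductSpace ℂ E] (hε : 0 ≤ ε)
    (hf : ∀ x ∈ closedBall 0 ε, DifferentiableAt ℂ f x) {V : E → E} {χ : E → ℝ}
    (hχ : ∀ x ∈ milnorTube f ε η, χ x = 1) (hVf : ∀ x, fderiv ℂ f x (V x) = χ x * I * f x)
    (hV : ∀ x, ε ≤ ‖x‖ → inner ℂ x (V x) = 0) {γ : ℝ → E} (hγ : IsIntegralCurve γ fun _ ↦ V)
    (h0 : γ 0 ∈ milnorTube f ε η) (t : ℝ) :
    γ t ∈ milnorTube f ε η ∧ f (γ t) = exp (t * I) * f (γ 0) := by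
  have hball : ∀ t, γ t ∈ closedBall 0 ε := fun t ↦ mem_closedBall_zero_iff.2
    (norm_le_of_isIntegralCurve hε hV hγ (mem_closedBall_zero_iff.1 h0.1) t)
  have hfγ : ∀ t, HasDerivAt (fun t ↦ f (γ t)) (χ (γ t) * I * f (γ t)) t := fun t ↦ by
    rw [← hVf]
    exact ((hf _ (hball t)).hasFDerivAt.restrictScalars ℝ).comp_hasDerivAt t (hγ t)
  have htube : ∀ t, γ t ∈ milnorTube f ε η := fun t ↦
    ⟨hball t, (norm_eq_of_hasDerivAt_I_mul hfγ t 0).trans h0.2⟩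
  exact ⟨htube t, eq_exp_mul_of_hasDerivAt (fun t ↦ by simpa [hχ _ (htube t)] using hfγ t) t⟩

end Tube

/-! ### Local triviality from flows -/

section Flow

open Set Topology

variable {E : Type*} [NormedAddCommGroup E] [NormedSpace ℝ E] {V : E → E} {K : ℝ≥0} {C : ℝ}

lemma exists_hasDerivAt_Ioo [CompleteSpace E] (hK : LipschitzWith K V) (hC : ∀ x, ‖V x‖ ≤ C)
    (x : E) {T : ℝ} (hT : 0 < T) :
    ∃ γ : ℝ → E, γ 0 = x ∧ ∀ t ∈ Ioo (-T) T, HasDerivAt γ (V (γ t)) t := by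
  have hC0 : 0 ≤ C := (norm_nonneg _).trans (hC 0)
  have hPL : IsPicardLindelof (fun _ ↦ V) (⟨0, by linarith, hT.le⟩ : Icc (-T) T) x
      ⟨C * T, by positivity⟩ 0 ⟨C, hC0⟩ K :=
    .of_time_independent (fun x _ ↦ hC x) hK.lipschitzOnWith <| by
      change C * max (T - 0) (0 - -T) ≤ C * T - 0
      simp
  obtain ⟨γ, hγ0, hγ⟩ := hPL.exists_eq_forall_mem_Icc_hasDerivWithinAt₀
  exact ⟨γ, hγ0, fun t ht ↦ (hγ t (Ioo_subset_Icc_self ht)).hasDerivAt (Icc_mem_nhds ht.1 ht.2)⟩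

lemma exists_isIntegralCurve [CompleteSpace E] (hK : LipschitzWith K V) (hC : ∀ x, ‖V x‖ ≤ C)
    (x : E) : ∃ γ : ℝ → E, γ 0 = x ∧ IsIntegralCurve γ fun _ ↦ V := by
  choose γ hγ0 hγ using fun T : Ioi (0 : ℝ) ↦ exists_hasDerivAt_Ioo hK hC x T.2
  have hγγ : ∀ {S T : Ioi (0 : ℝ)}, S ≤ T → EqOn (γ S) (γ T) (Ioo (-S) S) := fun {S T} hST ↦
    ODE_solution_unique_of_mem_Ioo (v := fun _ ↦ V) (s := fun _ ↦ univ) (t₀ := 0)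
      (fun _ _ ↦ hK.lipschitzOnWith) ⟨neg_lt_zero.2 S.2, S.2⟩ (fun t ht ↦ ⟨hγ S t ht, trivial⟩)
      (fun t ht ↦ ⟨hγ T t (Ioo_subset_Ioo (neg_le_neg (show (S : ℝ) ≤ T from hST)) hST ht),
        trivial⟩)
      ((hγ0 S).trans (hγ0 T).symm)
  let τ (t : ℝ) : Ioi (0 : ℝ) := ⟨|t| + 1, Set.mem_Ioi.2 (by positivity)⟩
  refine ⟨fun t ↦ γ (τ t) t, hγ0 _, fun t ↦ ?_⟩
  let T : Ioi (0 : ℝ) := ⟨|t| + 2, Set.mem_Ioi.2 (by positivity)⟩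
  have heq : ∀ s, |s| < |t| + 1 → γ (τ s) s = γ T s := fun s hs ↦
    hγγ (show |s| + 1 ≤ |t| + 2 by linarith) (abs_lt.1 (lt_add_one |s|))
  have hT : HasDerivAt (γ T) (V (γ (τ t) t)) t := by
    rw [heq t (lt_add_one _)]
    exact hγ T t (abs_lt.1 (by simp [T]))
  exact hT.congr_of_eventuallyEq ((continuous_abs.tendsto t).eventually_lt_const
    (lt_add_one _) |>.mono heq)

lemma dist_le_of_isIntegralCurve (hK : LipschitzWith K V) {γ δ : ℝ → E}
    (hγ : IsIntegralCurve γ fun _ ↦ V) (hδ : IsIntegralCurve δ fun _ ↦ V) (t : ℝ) :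
    dist (γ t) (δ t) ≤ dist (γ 0) (δ 0) * Real.exp (K * |t|) := by
  wlog ht : 0 ≤ t generalizing t γ δ V
  · have hK' : LipschitzWith K fun x ↦ (-1 : ℝ) • V x := by
      simp only [neg_one_smul]
      exact hK.neg
    simpa using this hK' (hγ.comp_mul (-1)) (hδ.comp_mul (-1)) (-t) (by linarith)
  have h := dist_le_of_trajectories_ODE (v := fun _ ↦ V) (fun _ ↦ hK) hγ.continuous.continuousOn
    (fun s _ ↦ (hγ s).hasDerivWithinAt) hδ.continuous.continuousOn
    (fun s _ ↦ (hδ s).hasDerivWithinAt) le_rfl t ⟨ht, le_rfl⟩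
  simpa [abs_of_nonneg ht] using h

lemma exists_flow_isIntegralCurve [CompleteSpace E] (hK : LipschitzWith K V)
    (hC : ∀ x, ‖V x‖ ≤ C) : ∃ Φ : Flow ℝ E, ∀ x, IsIntegralCurve (Φ · x) fun _ ↦ V := by
  choose Φ hΦ0 hΦ using exists_isIntegralCurve hK hC
  refine ⟨⟨fun t x ↦ Φ x t, ?_, fun t s x ↦ ?_, hΦ0⟩, hΦ⟩
  · refine continuous_iff_continuousAt.2 fun ⟨t₀, x₀⟩ ↦ tendsto_iff_dist_tendsto_zero.2 ?_
    have hbound : Continuous fun q : ℝ × E ↦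
        dist q.2 x₀ * Real.exp (K * |q.1|) + dist (Φ x₀ q.1) (Φ x₀ t₀) := by
      have := (hΦ x₀).continuous
      fun_prop
    refine squeeze_zero (fun _ ↦ dist_nonneg) (fun q ↦ (dist_triangle _ (Φ x₀ q.1) _).trans
      (add_le_add_left ?_ _)) (by simpa using hbound.tendsto (t₀, x₀))
    have h := dist_le_of_isIntegralCurve hK (hΦ q.2) (hΦ x₀) q.1
    rwa [hΦ0, hΦ0] at h
  · have h := dist_le_of_isIntegralCurve hK ((hΦ x).comp_add s) (hΦ (Φ x s)) t
    simpa [hΦ0] using h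

end Flow

section LocalTriviality

open Topology

lemma isLocTrivFib_of_flow {G : Type*} [TopologicalSpace G] [AddGroup G] [ContinuousNeg G]
    {Z B : Type} [TopologicalSpace Z] [TopologicalSpace B] (Φ : Flow G Z) (Ψ : Flow G B) {p : Z → B}
    (hp : Continuous p) (hΦ : ∀ t z, p (Φ t z) = Ψ t (p z)) (b₀ : B)
    (hloc : ∀ b, ∃ W, IsOpen W ∧ b ∈ W ∧
      ∃ θ : B → G, ContinuousOn θ W ∧ ∀ w ∈ W, Ψ (θ w) b₀ = w) : IsLocTrivFib p := by
  refine ⟨p ⁻¹' {b₀}, inferInstance, hp, fun b ↦ ?_⟩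
  obtain ⟨W, hW, hb, θ, hθ, hθW⟩ := hloc b
  have hθc : Continuous fun w : W ↦ θ w := hθ.domRestrict
  have hneg : ∀ w ∈ W, Ψ (-θ w) w = b₀ := fun w hw ↦
    calc Ψ (-θ w) w = Ψ (-θ w) (Ψ (θ w) b₀) := by rw [hθW w hw]
      _ = b₀ := by rw [← Ψ.map_add, neg_add_cancel, Ψ.map_zero, id]
  have hpθ : ∀ w ∈ W, ∀ z ∈ p ⁻¹' {b₀}, p (Φ (θ w) z) = w := fun w hw z hz ↦ by
    rw [hΦ, Set.mem_singleton_iff.1 hz, hθW w hw]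
  refine ⟨W, hW, hb, ⟨⟨fun z ↦ (⟨p z, z.2⟩, ⟨Φ (-θ (p z)) z, (hΦ _ _).trans (hneg _ z.2)⟩),
    fun q ↦ ⟨Φ (θ q.1) q.2, ?_⟩, fun z ↦ ?_, fun q ↦ ?_⟩, ?_, ?_⟩, fun z ↦ rfl⟩
  · rw [Set.mem_preimage, hpθ _ q.1.2 _ q.2.2]
    exact q.1.2
  · simp [← Φ.map_add]
  · simp [hpθ _ q.1.2 _ q.2.2, ← Φ.map_add]
  · have hpW : Continuous fun z : p ⁻¹' W ↦ (⟨p z, z.2⟩ : W) := by fun_prop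
    exact hpW.prodMk ((Φ.continuous (hθc.comp hpW).neg continuous_subtype_val).subtype_mk _)
  · exact (Φ.continuous (hθc.comp continuous_fst)
      (continuous_subtype_val.comp continuous_snd)).subtype_mk _

/-- The flow on the circle of radius `η` that rotates it at unit angular speed. -/
noncomputable def rotationFlow (η : ℝ) : Flow ℝ {w : ℂ | ‖w‖ = η} where
  toFun t w := ⟨Complex.exp (t * Complex.I) * w, by
    rw [Set.mem_ofPred, norm_mul, Complex.norm_exp_ofReal_mul_I, one_mul]; exact w.2⟩
  cont' := by
    refine Continuous.subtype_mk ?_ _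
    fun_prop
  map_add' t s w := Subtype.ext (by simp [add_mul, Complex.exp_add, mul_assoc])
  map_zero' w := Subtype.ext (by simp)

lemma exp_arg_mul_I_of_norm_eq_one {z : ℂ} (hz : ‖z‖ = 1) :
    Complex.exp (z.arg * Complex.I) = z := by
  simpa [hz] using Complex.norm_mul_exp_arg_mul_I z

lemma exists_continuousOn_rotationFlow_eq {η : ℝ} (hη : 0 < η) (b : {w : ℂ | ‖w‖ = η}) :
    ∃ W, IsOpen W ∧ b ∈ W ∧ ∃ θ : {w : ℂ | ‖w‖ = η} → ℝ, ContinuousOn θ W ∧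
      ∀ w ∈ W, rotationFlow η (θ w) ⟨η, by simp [hη.le]⟩ = w := by
  have hnorm (w : {w : ℂ | ‖w‖ = η}) : ‖(w : ℂ)‖ = η := w.2
  have hb0 : (b : ℂ) ≠ 0 := norm_pos_iff.1 (by rwa [hnorm])
  have hdiv : Continuous fun w : {w : ℂ | ‖w‖ = η} ↦ (w : ℂ) / b :=
    continuous_subtype_val.div_const _
  refine ⟨{w | (w : ℂ) / b ∈ Complex.slitPlane}, Complex.isOpen_slitPlane.preimage hdiv,
    by simp [div_self hb0], fun w ↦ ((w : ℂ) / b).arg + ((b : ℂ) / η).arg, fun w hw ↦ ?_,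
    fun w _ ↦ Subtype.ext ?_⟩
  · exact (((Complex.continuousAt_arg hw).comp (f := fun w : {w : ℂ | ‖w‖ = η} ↦ (w : ℂ) / b)
      hdiv.continuousAt).add continuousAt_const).continuousWithinAt
  · change Complex.exp ((_ + _ : ℝ) * Complex.I) * η = w
    rw [Complex.ofReal_add, add_mul, Complex.exp_add,
      exp_arg_mul_I_of_norm_eq_one (by rw [norm_div, hnorm, hnorm, div_self hη.ne']),
      exp_arg_mul_I_of_norm_eq_one (by simp [hnorm, abs_of_pos hη, hη.ne'])]
    have : (η : ℂ) ≠ 0 := Complex.ofReal_ne_zero.2 hη.ne'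
    field_simp

end LocalTriviality

section Fibration

open Topology Metric

lemma isLocTrivFib_milnorTube {E : Type} [NormedAddCommGroup E] [InnerProductSpace ℂ E]
    [FiniteDimensional ℂ E] {f : E → ℂ} {ε ε₁ η : ℝ} (hε : 0 < ε) (hε₁ : ε < ε₁) (hf0 : f 0 = 0)
    (hη : 0 < η) (hf : ∀ x ∈ ball 0 ε₁, ContDiffAt ℂ 2 f x)
    (hreg : ∀ x ∈ milnorTube f ε η, fderiv ℂ f x ≠ 0)
    (htrans : ∀ x ∈ milnorTube f ε η, ‖x‖ = ε → ∀ μ : ℂ, ¬ ∀ v, fderiv ℂ f x v = μ * inner ℂ x v)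
    {p : milnorTube f ε η → {w : ℂ | ‖w‖ = η}} (hp : ∀ x, (p x : ℂ) = f x) : IsLocTrivFib p := by
  have : CompleteSpace E := FiniteDimensional.complete ℂ E
  obtain ⟨V, χ, ⟨K, hK⟩, ⟨C, hC⟩, hχ, hVf, hV⟩ :=
    exists_lipschitzWith_lift hε hε₁ hf0 hη hf hreg htrans
  obtain ⟨Φ, hΦ⟩ := exists_flow_isIntegralCurve hK hC
  have hdiff : ∀ x ∈ closedBall 0 ε, DifferentiableAt ℂ f x := fun x hx ↦
    (hf x (closedBall_subset_ball hε₁ hx)).differentiableAt two_ne_zero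
  have hflow : ∀ x ∈ milnorTube f ε η, ∀ t,
      Φ t x ∈ milnorTube f ε η ∧ f (Φ t x) = Complex.exp (t * Complex.I) * f x := fun x hx t ↦ by
    have h := milnorTube_of_isIntegralCurve hε.le hdiff hχ hVf hV (hΦ x)
      (by rwa [Φ.map_zero_apply]) t
    rwa [Φ.map_zero_apply] at h
  have hinv : IsInvariant Φ (milnorTube f ε η) := fun t x hx ↦ (hflow x hx t).1
  have hpc : Continuous p := by
    refine continuous_induced_rng.2 (continuous_iff_continuousAt.2 fun x ↦ ?_)
    simp only [Function.comp_def, hp]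
    exact (hdiff x x.2.1).continuousAt.comp
      continuous_subtype_val.continuousAt
  refine isLocTrivFib_of_flow (Φ.restrict hinv) (rotationFlow η) hpc (fun t x ↦ Subtype.ext ?_) _
    (exists_continuousOn_rotationFlow_eq hη)
  rw [hp, Flow.coe_restrict_apply]
  exact (hflow x x.2 t).2.trans (by rw [← hp]; rfl)

end Fibration

section CoordinateFree

open Topology

lemma eventually_differentiableAt_comp_clm {F G : Type*} [NormedAddCommGroup F] [NormedSpace ℂ F]
    [NormedAddCommGroup G] [NormedSpace ℂ G] {f : G → ℂ} (hf : ∀ᶠ x in 𝓝 0, DifferentiableAt ℂ f x)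
    (L : F →L[ℂ] G) : ∀ᶠ y in 𝓝 0, DifferentiableAt ℂ (f ∘ L) y :=
  (L.continuous.tendsto' 0 0 (map_zero L)).eventually hf |>.mono fun y hy ↦
    hy.comp y L.differentiableAt

lemma contDiffAt_zero_of_eventually_differentiableAt {E : Type*} [NormedAddCommGroup E]
    [NormedSpace ℂ E] [FiniteDimensional ℂ E] {f : E → ℂ}
    (hf : ∀ᶠ x in 𝓝 0, DifferentiableAt ℂ f x) (m : ℕ) : ContDiffAt ℂ m f 0 := by
  let e : E ≃L[ℂ] (Fin (Module.finrank ℂ E) → ℂ) := .ofFinrankEq (by simp)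
  obtain ⟨P, hP⟩ := exists_eventually_convEval_eq (eventually_differentiableAt_comp_clm hf
    (e.symm : (Fin (Module.finrank ℂ E) → ℂ) →L[ℂ] E))
  have hg : ContDiffAt ℂ m (f ∘ e.symm) (e 0) := by
    rw [map_zero]
    exact (contDiffAt_convEval m P).congr_of_eventuallyEq (hP.mono fun _ ↦ Eq.symm)
  simpa [Function.comp_assoc] using hg.comp 0 e.contDiff.contDiffAt

lemma radial_estimate_inner {E : Type*} [NormedAddCommGroup E] [InnerProductSpace ℂ E]
    [FiniteDimensional ℂ E] {f : E → ℂ} (hf0 : f 0 = 0)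
    (hf : ∀ᶠ x in 𝓝 0, DifferentiableAt ℂ f x) :
    ∃ N : ℕ, ∀ᶠ x in 𝓝 0, f x ≠ 0 → ∀ μ, (∀ v, fderiv ℂ f x v = μ * inner ℂ x v) →
      (‖x‖ ^ 2) ^ N ≤ ‖f x‖ ∧ μ ≠ 0 := by
  let b := stdOrthonormalBasis ℂ E
  let e : E ≃L[ℂ] (Fin (Module.finrank ℂ E) → ℂ) :=
    b.repr.toContinuousLinearEquiv.trans (EuclideanSpace.equiv _ ℂ)
  have hg0 : (f ∘ e.symm) 0 = 0 := by simp [hf0]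
  obtain ⟨N, hN⟩ := radial_estimate hg0 (eventually_differentiableAt_comp_clm hf
    (e.symm : (Fin (Module.finrank ℂ E) → ℂ) →L[ℂ] E))
  refine ⟨N, ?_⟩
  filter_upwards [(e.continuous.tendsto' 0 0 (map_zero e)).eventually hN] with x hx hfx μ hμ
  have hsingle : ∀ i, e.symm (Pi.single i 1) = b i := fun i ↦ by simp [e]
  have hderiv : ∀ i, fderiv ℂ (f ∘ e.symm) (e x) (Pi.single i 1) = μ * conj (e x i) := fun i ↦ by
    have hcoord : inner ℂ x (b i) = conj (e x i) := by
      rw [← inner_conj_symm, ← b.repr_apply_apply]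
      rfl
    rw [e.symm.comp_right_fderiv]
    simp [hsingle, hμ, hcoord]
  have hnorm : ∑ i, ‖e x i‖ ^ 2 = ‖x‖ ^ 2 := by
    rw [← b.repr.norm_map x, EuclideanSpace.norm_sq_eq]
    rfl
  simpa [hnorm] using hx (by simpa using hfx) μ hderiv

end CoordinateFree

end

theorem stmt_4_general {E : Type} [NormedAddCommGroup E] [InnerProductSpace ℂ E]
    [FiniteDimensional ℂ E] (U : Set E) (hU : IsOpen U) (h0U : (0 : E) ∈ U) (f : E → ℂ)
    (hf : DifferentiableOn ℂ f U) (hf0 : f 0 = 0) :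
    ∃ ε₀ > (0 : ℝ), Metric.closedBall (0 : E) ε₀ ⊆ U ∧
      ∀ ε : ℝ, 0 < ε → ε ≤ ε₀ →
      ∃ η₀ > (0 : ℝ), ∀ η : ℝ, 0 < η → η ≤ η₀ →
        ∃ p : ({x ∈ Metric.closedBall (0 : E) ε | ‖f x‖ = η} : Set E) →
            ({w : ℂ | ‖w‖ = η} : Set ℂ),
          (∀ x, (p x : ℂ) = f (x.1 : E)) ∧ IsLocTrivFib p := by
  have hdiff : ∀ᶠ x in nhds (0 : E), DifferentiableAt ℂ f x :=
    hf.eventually_differentiableAt (hU.mem_nhds h0U)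
  obtain ⟨N, hN⟩ := radial_estimate_inner hf0 hdiff
  have hC2 : ∀ᶠ x in nhds (0 : E), ContDiffAt ℂ 2 f x :=
    (contDiffAt_zero_of_eventually_differentiableAt hdiff 2).eventually (by decide)
  obtain ⟨ρ, hρ, hball⟩ := Metric.nhds_basis_ball.eventually_iff.1
    (hN.and (hC2.and (hU.mem_nhds h0U)))
  have hsub : ∀ {ε}, ε ≤ ρ / 2 → Metric.closedBall (0 : E) ε ⊆ Metric.ball 0 ρ := fun hε ↦
    Metric.closedBall_subset_ball (by linarith)
  refine ⟨ρ / 2, half_pos hρ, fun x hx ↦ (hball (hsub le_rfl hx)).2.2, fun ε hε hερ ↦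
    ⟨(ε ^ 2) ^ N / 2, by positivity, fun η hη hηε ↦ ⟨fun x ↦ ⟨f x, x.2.2⟩, fun _ ↦ rfl, ?_⟩⟩⟩
  have hmult : ∀ x ∈ milnorTube f ε η, ∀ μ : ℂ, (∀ v, fderiv ℂ f x v = μ * inner ℂ x v) →
      (‖x‖ ^ 2) ^ N ≤ η ∧ μ ≠ 0 := fun x hx μ hμ ↦ by
    have hfx : f x ≠ 0 := norm_pos_iff.1 (hx.2.symm ▸ hη)
    exact hx.2 ▸ (hball (hsub hερ hx.1)).1 hfx μ hμ
  refine isLocTrivFib_milnorTube hε (show ε < ρ by linarith) hf0 hη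
    (fun x hx ↦ (hball hx).2.1) (fun x hx h0 ↦ ?_) (fun x hx hxε μ hμ ↦ ?_) fun _ ↦ rfl
  · exact (hmult x hx 0 (by simp [h0])).2 rfl
  · have hle : (ε ^ 2) ^ N ≤ η := hxε ▸ (hmult x hx μ hμ).1
    exact (half_lt_self (by positivity)).not_ge (hle.trans hηε)

theorem stmt_4 (n : ℕ) (hn : 1 ≤ n)
    (U : Set (EuclideanSpace ℂ (Fin n))) (hU : IsOpen U)
    (h0U : (0 : EuclideanSpace ℂ (Fin n)) ∈ U)
    (f : EuclideanSpace ℂ (Fin n) → ℂ) (hf : DifferentiableOn ℂ f U) (hf0 : f 0 = 0)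
    (hfnz : ∀ W ∈ nhds (0 : EuclideanSpace ℂ (Fin n)), ∃ x ∈ W ∩ U, f x ≠ 0) :
    ∃ ε₀ > (0 : ℝ), Metric.closedBall (0 : EuclideanSpace ℂ (Fin n)) ε₀ ⊆ U ∧
      ∀ ε : ℝ, 0 < ε → ε ≤ ε₀ →
      ∃ η₀ > (0 : ℝ), ∀ η : ℝ, 0 < η → η ≤ η₀ →
        ∃ p : ({x ∈ Metric.closedBall (0 : EuclideanSpace ℂ (Fin n)) ε | ‖f x‖ = η} : Set _) →
            ({w : ℂ | ‖w‖ = η} : Set ℂ),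
          (∀ x, (p x : ℂ) = f (x.1 : EuclideanSpace ℂ (Fin n))) ∧
          IsLocTrivFib p :=
  stmt_4_general U hU h0U f hf hf0
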